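/- For every integer k ≥ 3 and every ε > 0 there exists c > 0 such that the following holds for all sufficiently large n. Let r = (k² − k + 2)/2. If G is an ordered graph on n vertices containing no induced monotone path P_{2k}, and the complement Ḡ of G contains at least ε·n^r copies of K_r, then Ḡ contains the complete bipartite graph K_2[t] with t = ⌈c·n/log n⌉. -/

import Mathlib

/-- The number of `r`-element vertex subsets of `G` inducing a complete subgraph
(copies of `K_r`). -/
noncomputable def cliqueCount {V : Type*} [Fintype V] (G : SimpleGraph V) (r : ℕ) : ℕ :=
  Set.ncard {s : Finset V | s.card = r ∧ G.IsClique (s : Set V)}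

/-- `G` contains `K_r[t]`: `r` pairwise disjoint vertex sets of size `t` with all
pairs of vertices from distinct sets adjacent. -/
def ContainsBlowup {V : Type*} (G : SimpleGraph V) (r t : ℕ) : Prop :=
  ∃ A : Fin r → Finset V,
    (∀ i, (A i).card = t) ∧
    (∀ i j, i ≠ j → Disjoint (A i) (A j)) ∧
    (∀ i j, i ≠ j → ∀ x ∈ A i, ∀ y ∈ A j, G.Adj x y)

/-- The ordered graph `G` on `Fin n` contains an induced monotone path with `m`
vertices: `v 0 < v 1 < ⋯ < v (m-1)` with adjacency exactly between consecutive
vertices. -/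
def HasIndMonPath {n : ℕ} (G : SimpleGraph (Fin n)) (m : ℕ) : Prop :=
  ∃ v : Fin m → Fin n, StrictMono v ∧
    ∀ i j : Fin m, G.Adj (v i) (v j) ↔ ((i : ℕ) + 1 = (j : ℕ) ∨ (j : ℕ) + 1 = (i : ℕ))

/-!
Suppose that the complement of `G` has many copies of `K_r` but contains no `K_2[t]`. The first
assumption gives, by a density increment argument, increasing sets `B_1 < ⋯ < B_r` of linear size
with many non-adjacent pairs between any large subsets of any two of them. By the second, of two
large sets there is always a vertex in the first from which increasing paths reach many vertices of
the second: bisecting the set of starting vertices costs `O(t)` vertices at each step, hence the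
logarithm. Such a path, shortcut to be induced, can be continued until it meets a vertex with many
neighbours in a set prescribed in advance. This places two vertices of an induced path in each set
of a chain of pairwise sparse sets.

If there is no induced `P_{2k}`, such chains have fewer than `k` sets, so inside each `B_i` there
is a pair `C_i < D_i` such that any large subset of `C_i` has a vertex with many neighbours in any
given large subset of `D_i`. After shrinking, the `i`-th pair is either rich in this sense (red)
or sparse towards each later pair. Among `r = (k choose 2) + 1` indices there are `k` that start
as an increasing red path and, from the last vertex of this path on, contain no two joined in red.
An induced monotone path can be driven through `C_i` and `D_i` along the red path, where the
density of non-adjacent pairs keeps the later sets available, and finishes along the sparse sets.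
Each index contributes two vertices.
-/

namespace OrderedGraph

open Finset

section Basic

variable {V : Type*} {P : V → V → Prop} {a x : V} {S T : Finset V}

open scoped Classical in
/-- The elements of `S` in relation `P` to `a`. For `P = G.Adj` these are the neighbours of `a`
in `S`, for `P = G.Adjᶜ` the non-neighbours (among them `a` itself, if `a ∈ S`). -/
noncomputable def relIn (P : V → V → Prop) (a : V) (S : Finset V) : Finset V :=
  {x ∈ S | P a x}

lemma mem_relIn : x ∈ relIn P a S ↔ x ∈ S ∧ P a x := by
  simp [relIn]

lemma relIn_subset : relIn P a S ⊆ S :=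
  fun _ hx => (mem_relIn.1 hx).1

lemma relIn_mono (h : S ⊆ T) : relIn P a S ⊆ relIn P a T :=
  fun _ hx => mem_relIn.2 ⟨h (mem_relIn.1 hx).1, (mem_relIn.1 hx).2⟩

lemma relIn_sdiff [DecidableEq V] : relIn P a (S \ T) = relIn P a S \ T := by
  ext x
  simp only [mem_relIn, mem_sdiff, and_right_comm]

lemma relIn_inter [DecidableEq V] : relIn P a (S ∩ T) = S ∩ relIn P a T := by
  ext x
  simp only [mem_relIn, mem_inter, and_assoc]

lemma card_relIn_add_card_relIn_compl (P : V → V → Prop) (a : V) (S : Finset V) :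
    #(relIn P a S) + #(relIn Pᶜ a S) = #S := by
  classical
  simpa [relIn] using card_filter_add_card_filter_not (s := S) (P a)

/-- Every element of `A` precedes every element of `B`. -/
def Before [LT V] (A B : Finset V) : Prop :=
  ∀ a ∈ A, ∀ b ∈ B, a < b

lemma Before.mono [LT V] {A B A' B' : Finset V} (h : Before A B) (hA : A' ⊆ A) (hB : B' ⊆ B) :
    Before A' B' :=
  fun a ha b hb => h a (hA ha) b (hB hb)

lemma exists_initial_segment [LinearOrder V] (E : Finset V) {a : ℕ} (ha : a ≤ #E) :
    ∃ E₁ ⊆ E, #E₁ = a ∧ Before E₁ (E \ E₁) := by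
  induction a with
  | zero => exact ⟨∅, by simp, by simp, by simp [Before]⟩
  | succ a ih =>
    obtain ⟨E₁, hE, hc, hb⟩ := ih (by omega)
    have hne : (E \ E₁).Nonempty := by
      rw [← card_pos, card_sdiff_of_subset hE]; omega
    have hm := min'_mem _ hne
    rw [mem_sdiff] at hm
    refine ⟨insert ((E \ E₁).min' hne) E₁, insert_subset hm.1 hE, ?_, ?_⟩
    · rw [card_insert_of_notMem hm.2, hc]
    · intro x hx y hy
      rw [mem_sdiff, mem_insert, not_or] at hy
      have hy' : y ∈ E \ E₁ := mem_sdiff.2 ⟨hy.1, hy.2.2⟩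
      rcases mem_insert.1 hx with rfl | hx
      · exact lt_of_le_of_ne (min'_le _ _ hy') (Ne.symm hy.2.1)
      · exact hb x hx y hy'

end Basic

section Paths

variable {V : Type*} [LinearOrder V] {G : SimpleGraph V}

/-- `StartsIndPath G p T v`: there is an induced monotone path of `G` with first vertex `v` and
`p` edges, all of whose other vertices lie in `T`. -/
def StartsIndPath (G : SimpleGraph V) : ℕ → Finset V → V → Prop
  | 0, _, _ => True
  | p + 1, T, v => ∃ w ∈ T, v < w ∧ G.Adj v w ∧ StartsIndPath G p (relIn G.Adjᶜ v T) w

lemma StartsIndPath.exists_fin {p : ℕ} {T : Finset V} {v : V} (h : StartsIndPath G p T v) :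
    ∃ f : Fin (p + 1) → V, f 0 = v ∧ (∀ i : Fin p, f i.succ ∈ T) ∧ StrictMono f ∧
      ∀ i j, G.Adj (f i) (f j) ↔ (i : ℕ) + 1 = j ∨ (j : ℕ) + 1 = i := by
  induction p generalizing T v with
  | zero => exact ⟨fun _ => v, rfl, Fin.elim0, Subsingleton.strictMono (α := Fin 1) _,
      by simp⟩
  | succ p ih =>
    obtain ⟨w, hw, hvw, hadj, hp⟩ := h
    obtain ⟨f, rfl, hfT, hf, hfG⟩ := ih hp
    have hv : ∀ j, G.Adj v (f j) ↔ j = 0 := by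
      refine fun j => ⟨fun h => ?_, fun h => h ▸ hadj⟩
      by_contra hj
      obtain ⟨i, rfl⟩ := Fin.exists_succ_eq.2 hj
      exact (mem_relIn.1 (hfT i)).2 h
    refine ⟨Fin.cons v f, rfl, fun i => ?_, Fin.strictMono_cons.2 ⟨fun i => ?_, hf⟩, ?_⟩
    · obtain rfl | ⟨i, rfl⟩ := i.eq_zero_or_eq_succ
      · exact hw
      · exact relIn_subset (hfT i)
    · exact hvw.trans_le (hf.monotone i.zero_le)
    · intro i j
      have hv' : ∀ j, G.Adj (f j) v ↔ j = 0 := fun j => (G.adj_comm _ _).trans (hv j)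
      obtain rfl | ⟨i, rfl⟩ := i.eq_zero_or_eq_succ <;>
        obtain rfl | ⟨j, rfl⟩ := j.eq_zero_or_eq_succ
      · simp
      · simp [hv, ← Fin.val_eq_zero_iff]
      · simp [hv', ← Fin.val_eq_zero_iff]
      · simp [hfG]

lemma StartsIndPath.hasIndMonPath {n p : ℕ} {G : SimpleGraph (Fin n)} {T : Finset (Fin n)}
    {v : Fin n} (h : StartsIndPath G p T v) : HasIndMonPath G (p + 1) :=
  let ⟨f, _, _, hf, hfG⟩ := h.exists_fin
  ⟨f, hf, hfG⟩

end Paths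

section Reachability

variable {V : Type*} [LinearOrder V] {G : SimpleGraph V} {t K : ℕ} {v w : V}
  {X Z Z' : Finset V}

/-- No two sets of size at least `t`, one before the other, are without edges between them. -/
def NoHole (G : SimpleGraph V) (t : ℕ) : Prop :=
  ∀ A B : Finset V, t ≤ #A → t ≤ #B → Before A B → ∃ a ∈ A, ∃ b ∈ B, G.Adj a b

/-- An increasing edge ending in `Z`. -/
def MonStep (G : SimpleGraph V) (Z : Finset V) (u w : V) : Prop :=
  u < w ∧ G.Adj u w ∧ w ∈ Z

/-- There is an increasing, not necessarily induced, path from `v` to `w` whose vertices after `v`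
lie in `Z`. -/
def Reach (G : SimpleGraph V) (Z : Finset V) : V → V → Prop :=
  Relation.ReflTransGen (MonStep G Z)

open scoped Classical in
/-- The vertices of `Z` that can be reached from `X` by increasing paths in `Z`. -/
noncomputable def reachSet (G : SimpleGraph V) (Z X : Finset V) : Finset V :=
  {w ∈ Z | ∃ x ∈ X, Reach G Z x w}

/-- Every set of size `t` followed by a set `Z` of size `K` has a vertex from which at least `t`
vertices can be reached inside `Z`. -/
def Launches (G : SimpleGraph V) (t K : ℕ) : Prop :=
  ∀ X Z : Finset V, t ≤ #X → K ≤ #Z → Before X Z → ∃ v ∈ X, t ≤ #(reachSet G Z {v})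

lemma mem_reachSet : w ∈ reachSet G Z X ↔ w ∈ Z ∧ ∃ x ∈ X, Reach G Z x w := by
  simp [reachSet]

lemma mem_reachSet_singleton : w ∈ reachSet G Z {v} ↔ w ∈ Z ∧ Reach G Z v w := by
  simp [mem_reachSet]

lemma reachSet_union [DecidableEq V] (X Y : Finset V) :
    reachSet G Z (X ∪ Y) = reachSet G Z X ∪ reachSet G Z Y := by
  ext w
  simp only [mem_reachSet, mem_union, or_and_right, exists_or, and_or_left]

lemma Reach.mono (h : Z ⊆ Z') (hr : Reach G Z v w) : Reach G Z' v w :=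
  Relation.ReflTransGen.mono (fun _ _ hs => ⟨hs.1, hs.2.1, h hs.2.2⟩) _ _ hr

lemma Reach.le (hr : Reach G Z v w) : v ≤ w := by
  induction hr with
  | refl => exact le_rfl
  | tail _ hs ih => exact ih.trans hs.1.le

lemma NoHole.pos (h : NoHole G t) : 0 < t := by
  rcases Nat.eq_zero_or_pos t with rfl | ht
  · obtain ⟨a, ha, -⟩ := h ∅ ∅ (by simp) (by simp) (by simp [Before])
    simp at ha
  · exact ht

lemma NoHole.card_sdiff_lt [DecidableEq V] (h : NoHole G t) {D E N : Finset V} (hD : t ≤ #D)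
    (hDE : Before D E) (hN : ∀ d ∈ D, ∀ e ∈ E, G.Adj d e → e ∈ N) : #(E \ N) < t := by
  by_contra! hc
  obtain ⟨d, hd, e, he, hde⟩ := h D (E \ N) hD hc (hDE.mono subset_rfl sdiff_subset)
  rw [mem_sdiff] at he
  exact he.2 (hN d hd e he.1 hde)

lemma NoHole.exists_front (h : NoHole G t) {D E : Finset V} (hD : t ≤ #D) (hDE : Before D E)
    (hE : 3 * t ≤ #E) :
    ∃ N ⊆ E, ∃ E' ⊆ E, 2 * t ≤ #N ∧ Before N E' ∧ #E ≤ #E' + 3 * t ∧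
      ∀ e ∈ N, ∃ d ∈ D, G.Adj d e := by
  classical
  obtain ⟨E₁, hE₁, hE₁c, hE₁b⟩ := exists_initial_segment E hE
  have hlt : #(E₁ \ {e ∈ E₁ | ∃ d ∈ D, G.Adj d e}) < t :=
    h.card_sdiff_lt hD (hDE.mono subset_rfl hE₁)
      fun d hd e he hde => mem_filter.2 ⟨he, d, hd, hde⟩
  rw [card_sdiff_of_subset (filter_subset _ _)] at hlt
  refine ⟨{e ∈ E₁ | ∃ d ∈ D, G.Adj d e}, (filter_subset _ _).trans hE₁, E \ E₁, sdiff_subset,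
    by omega, hE₁b.mono (filter_subset _ _) subset_rfl, ?_, fun e he => (mem_filter.1 he).2⟩
  rw [card_sdiff_of_subset hE₁]
  omega

-- Bisecting `X`: one of the two halves still reaches `t` vertices of `D`, and then `2 * t` vertices
-- among the next `3 * t` ones.
lemma NoHole.exists_large_reachSet (h : NoHole G t) (m : ℕ) {D E : Finset V} (hX : #X ≤ 2 ^ m)
    (hD : D ⊆ reachSet G Z X) (hDc : 2 * t ≤ #D) (hE : E ⊆ Z) (hDE : Before D E)
    (hEc : 3 * t * m ≤ #E) : ∃ v ∈ X, t ≤ #(reachSet G Z {v}) := by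
  classical
  have ht := h.pos
  induction m generalizing X D E with
  | zero =>
    obtain ⟨d, hd⟩ := card_pos.1 (by omega : 0 < #D)
    obtain ⟨-, x, hx, -⟩ := mem_reachSet.1 (hD hd)
    have hXx : X ⊆ {x} := fun y hy =>
      mem_singleton.2 (card_le_one.1 (by simpa using hX) y hy x hx)
    have hXx' : X = {x} := (subset_singleton_iff.1 hXx).resolve_left (ne_empty_of_mem hx)
    exact ⟨x, hx, le_trans (by omega) (card_le_card (hXx' ▸ hD))⟩
  | succ m ih =>
    have half : ∀ X' ⊆ X, #X' ≤ 2 ^ m → t ≤ #(D ∩ reachSet G Z X') →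
        ∃ v ∈ X, t ≤ #(reachSet G Z {v}) := by
      intro X' hX' hX'c hlarge
      have hE3 : 3 * t * (m + 1) = 3 * t * m + 3 * t := by ring
      obtain ⟨N, hN, E', hE', hNc, hNE', hE'c, hadj⟩ :=
        h.exists_front hlarge (hDE.mono inter_subset_left subset_rfl) (by omega)
      have hNr : N ⊆ reachSet G Z X' := by
        intro e he
        obtain ⟨d, hd, hde⟩ := hadj e he
        obtain ⟨hdD, hd⟩ := mem_inter.1 hd
        obtain ⟨-, x, hx, hr⟩ := mem_reachSet.1 hd
        exact mem_reachSet.2 ⟨hE (hN he), x, hx, hr.tail ⟨hDE d hdD e (hN he), hde, hE (hN he)⟩⟩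
      obtain ⟨v, hv, hvc⟩ := ih hX'c hNr hNc (hE'.trans hE) hNE' (by omega)
      exact ⟨v, hX' hv, hvc⟩
    obtain ⟨X₁, hX₁, hX₁c⟩ := exists_subset_card_eq (Nat.div_le_self #X 2)
    rw [pow_succ'] at hX
    by_cases hlarge : t ≤ #(D ∩ reachSet G Z X₁)
    · exact half X₁ hX₁ (by omega) hlarge
    · refine half (X \ X₁) sdiff_subset (by rw [card_sdiff_of_subset hX₁]; omega) ?_
      have hcover : D = D ∩ reachSet G Z X₁ ∪ D ∩ reachSet G Z (X \ X₁) := by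
        rw [← inter_union_distrib_left, ← reachSet_union, union_sdiff_of_subset hX₁,
          inter_eq_left.2 hD]
      have := (congrArg card hcover).trans_le (card_union_le _ _)
      omega

lemma NoHole.launches [Fintype V] (h : NoHole G t) {m : ℕ} (hm : Fintype.card V ≤ 2 ^ m) :
    Launches G t (3 * t * (m + 1)) := by
  intro X Z hX hZ hXZ
  have hZ3 : 3 * t * (m + 1) = 3 * t * m + 3 * t := by ring
  obtain ⟨N, hN, E, hE, hNc, hNE, hEc, hadj⟩ := h.exists_front hX hXZ (by omega)
  refine h.exists_large_reachSet m ((card_le_univ X).trans hm) (fun e he => ?_) hNc hE hNE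
    (by omega)
  obtain ⟨d, hd, hde⟩ := hadj e he
  exact mem_reachSet.2 ⟨hN he, d, hd, .single ⟨hXZ d hd e (hN he), hde, hN he⟩⟩

-- Jump from `q` to its last neighbour on an increasing path to `z`.
lemma Reach.exists_last_adj {q z : V} (hr : Reach G Z q z) (hqz : q < z) :
    ∃ q', MonStep G Z q q' ∧ Reach G (relIn G.Adjᶜ q Z) q' z := by
  induction hr with
  | refl => exact absurd hqz (lt_irrefl _)
  | @tail y z hy hs ih =>
    by_cases hz : G.Adj q z
    · exact ⟨z, ⟨hqz, hz, hs.2.2⟩, .refl⟩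
    · rcases (Reach.le hy).eq_or_lt with rfl | hqy
      · exact absurd hs.2.1 hz
      · obtain ⟨q', hq', hr'⟩ := ih hqy
        exact ⟨q', hq', hr'.tail ⟨hs.1, hs.2.1, mem_relIn.2 ⟨hs.2.2, hz⟩⟩⟩

/-- The connectivity of `G` used throughout, at the scales `t ≤ K`. -/
structure Linked (G : SimpleGraph V) (t K : ℕ) : Prop where
  noHole : NoHole G t
  launches : Launches G t K
  le : t ≤ K

lemma Linked.exists_adj_large_reachSet (h : Linked G t K) {q : V} {W S : Finset V}
    (hq : t ≤ #(reachSet G W {q})) (hWS : Before W S) (hS : S ⊆ relIn G.Adjᶜ q S)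
    (hSc : 3 * K ≤ #S) :
    ∃ q', MonStep G (W ∪ S) q q' ∧ t ≤ #(reachSet G (relIn G.Adjᶜ q (W ∪ S)) {q'}) := by
  classical
  set F : Finset V := {z ∈ S | q < z ∧ Reach G (W ∪ S) q z}
  have hFS : F ⊆ S := filter_subset _ _
  have hFc : #(S \ F) < t := by
    refine h.noHole.card_sdiff_lt hq (hWS.mono (filter_subset _ _) subset_rfl) ?_
    intro d hd u hu hdu
    obtain ⟨hdW, hqd⟩ := mem_reachSet_singleton.1 hd
    have hlt := hWS d hdW u hu
    have hqd' : Reach G (W ∪ S) q d := hqd.mono subset_union_left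
    exact mem_filter.2 ⟨hu, hqd.le.trans_lt hlt, hqd'.tail ⟨hlt, hdu, mem_union_right _ hu⟩⟩
  rw [card_sdiff_of_subset hFS] at hFc
  have htK := h.le
  obtain ⟨F₁, hF₁, hF₁c, hF₁b⟩ := exists_initial_segment F (a := t) (by omega)
  obtain ⟨z, hz, hzc⟩ := h.launches F₁ (F \ F₁) hF₁c.ge
    (by rw [card_sdiff_of_subset hF₁]; omega) hF₁b
  obtain ⟨-, hqz, hrz⟩ := mem_filter.1 (hF₁ hz)
  obtain ⟨q', hq', hr'⟩ := hrz.exists_last_adj hqz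
  refine ⟨q', hq', hzc.trans (card_le_card fun x hx => ?_)⟩
  have hsub : F \ F₁ ⊆ relIn G.Adjᶜ q (W ∪ S) :=
    sdiff_subset.trans (hFS.trans (hS.trans (relIn_mono subset_union_right)))
  obtain ⟨hxF, hzx⟩ := mem_reachSet_singleton.1 hx
  exact mem_reachSet_singleton.2 ⟨hsub hxF, hr'.trans (hzx.mono hsub)⟩

end Reachability

section SparseChains

variable {V : Type*} [LinearOrder V] {G : SimpleGraph V} {t K p : ℕ} {A A' : Finset V}
  {L : List (Finset V)} {T : Finset V} {q : V}

/-- `A` precedes `B` and every vertex of `A` has at most `#B / c` neighbours in `B`. -/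
def SparseTo (G : SimpleGraph V) (c : ℕ) (A B : Finset V) : Prop :=
  Before A B ∧ ∀ a ∈ A, c * #(relIn G.Adj a B) ≤ #B

/-- `A` followed by the sets of the list `L` of large subsets of `T`, each sparse to all later
ones. The parameters are chosen such that `p` vertices of an induced path can be placed in these
sets. -/
structure SparseChain (G : SimpleGraph V) (K p : ℕ) (A : Finset V) (L : List (Finset V))
    (T : Finset V) : Prop where
  pairwise : (A :: L).Pairwise (SparseTo G (4 ^ p))
  le_card : ∀ P ∈ L, 4 ^ p * (3 * K) ≤ #P
  subset : ∀ P ∈ L, P ⊆ T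

lemma card_le_four_mul_card_relIn_compl {B : Finset V} (hA : SparseTo G (4 ^ (p + 1)) A B)
    (hq : q ∈ A) : 3 * #B ≤ 4 * #(relIn G.Adjᶜ q B) := by
  have hdeg := hA.2 q hq
  have hcard := card_relIn_add_card_relIn_compl G.Adj q B
  have hle : 4 * #(relIn G.Adj q B) ≤ 4 ^ (p + 1) * #(relIn G.Adj q B) :=
    Nat.mul_le_mul_right _ (Nat.le_self_pow (by omega) 4)
  omega

lemma SparseTo.trim {B : Finset V} (h : SparseTo G (4 ^ (p + 1)) A B) (hA' : A' ⊆ A)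
    (hq : 3 * #B ≤ 4 * #(relIn G.Adjᶜ q B)) : SparseTo G (4 ^ p) A' (relIn G.Adjᶜ q B) := by
  refine ⟨h.1.mono hA' relIn_subset, fun a ha => ?_⟩
  have hdeg := h.2 a (hA' ha)
  have hmono := Nat.mul_le_mul_left (4 ^ p)
    (card_le_card (relIn_mono (P := G.Adj) (a := a) (relIn_subset (P := G.Adjᶜ) (a := q) (S := B))))
  rw [pow_succ'] at hdeg
  linarith

lemma SparseChain.card_le (h : SparseChain G K (p + 1) A L T) (hq : q ∈ A) :
    ∀ P ∈ L, 3 * #P ≤ 4 * #(relIn G.Adjᶜ q P) := fun P hP =>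
  card_le_four_mul_card_relIn_compl ((List.pairwise_cons.1 h.pairwise).1 P hP) hq

lemma SparseChain.trim (h : SparseChain G K (p + 1) A L T) (hA' : A' ⊆ A)
    (hq : ∀ P ∈ L, 3 * #P ≤ 4 * #(relIn G.Adjᶜ q P)) :
    SparseChain G K p A' (L.map (relIn G.Adjᶜ q)) (relIn G.Adjᶜ q T) := by
  obtain ⟨hA, hL⟩ := List.pairwise_cons.1 h.pairwise
  refine ⟨List.pairwise_cons.2 ⟨?_, ?_⟩, ?_, ?_⟩
  · exact List.forall_mem_map.2 fun P hP => (hA P hP).trim hA' (hq P hP)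
  · exact List.pairwise_map.2 (hL.imp_of_mem fun _ hQ hPQ => hPQ.trim relIn_subset (hq _ hQ))
  · refine List.forall_mem_map.2 fun P hP => ?_
    have hP₁ := h.le_card P hP
    have hP₂ := hq P hP
    rw [pow_succ', mul_assoc] at hP₁
    omega
  · exact List.forall_mem_map.2 fun P hP => relIn_mono (h.subset P hP)

lemma SparseChain.tail {P : Finset V} (h : SparseChain G K p A (P :: L) T) :
    SparseChain G K p P L T :=
  ⟨(List.pairwise_cons.1 h.pairwise).2, (List.forall_mem_cons.1 h.le_card).2,
    (List.forall_mem_cons.1 h.subset).2⟩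

/-- `q` and `W` precede `S`, and increasing paths from `q` in `W` reach at least `t` vertices. -/
structure Poised (G : SimpleGraph V) (t : ℕ) (q : V) (W S : Finset V) : Prop where
  le_card : t ≤ #(reachSet G W {q})
  before : Before W S
  lt : ∀ s ∈ S, q < s

lemma Poised.exists_step (h : Linked G t K) {W S : Finset V} (hq : Poised G t q W S)
    (hS : 3 * K ≤ #(relIn G.Adjᶜ q S)) :
    ∃ q', MonStep G (W ∪ S) q q' ∧ ∃ W' ⊆ relIn G.Adjᶜ q (W ∪ S), ∃ S' ⊆ relIn G.Adjᶜ q S,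
      Poised G t q' W' S' ∧ #(relIn G.Adjᶜ q S) ≤ #S' + 3 * K := by
  obtain ⟨Z, hZ, hZc, hZb⟩ := exists_initial_segment (relIn G.Adjᶜ q S) hS
  have hZS : Z ⊆ S := hZ.trans relIn_subset
  have hZq : Z ⊆ relIn G.Adjᶜ q Z := fun x hx => mem_relIn.2 ⟨hx, (mem_relIn.1 (hZ hx)).2⟩
  obtain ⟨q', hq', hq'c⟩ := h.exists_adj_large_reachSet hq.le_card
    (hq.before.mono subset_rfl hZS) hZq hZc.ge
  have hWZ : W ∪ Z ⊆ W ∪ S := union_subset_union_right hZS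
  have hlt : Before (W ∪ Z) (relIn G.Adjᶜ q S \ Z) := by
    intro a ha b hb
    rcases mem_union.1 ha with ha | ha
    · exact hq.before a ha b (relIn_subset (sdiff_subset hb))
    · exact hZb a ha b hb
  refine ⟨q', ⟨hq'.1, hq'.2.1, hWZ hq'.2.2⟩, relIn G.Adjᶜ q (W ∪ Z), relIn_mono hWZ, _,
    sdiff_subset, ⟨hq'c, hlt.mono relIn_subset subset_rfl, hlt q' hq'.2.2⟩, ?_⟩
  rw [card_sdiff_of_subset hZ]
  omega

mutual

-- `q` continues inside `W ∪ S` as long as it has few neighbours in `S`; as soon as it has many,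
-- the path jumps to them and proceeds along the chain.
theorem Poised.startsIndPath (h : Linked G t K) (p : ℕ) {q : V} {W S T : Finset V}
    {L : List (Finset V)} (hq : Poised G t q W S) (hS : 4 ^ p * (3 * K) ≤ #S) (hT : W ∪ S ⊆ T)
    (hL : SparseChain G K p (insert q (W ∪ S)) L T) (hp : p ≤ 2 * L.length + 1) :
    StartsIndPath G p T q := by
  match p with
  | 0 => trivial
  | p + 1 =>
    have htK := h.le
    have hcard := card_relIn_add_card_relIn_compl G.Adj q S
    have hpos : K ≤ 4 ^ p * K := Nat.le_mul_of_pos_left _ (by positivity)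
    have hST : S ⊆ T := subset_union_right.trans hT
    have hqA : q ∈ insert q (W ∪ S) := mem_insert_self _ _
    rw [pow_succ', mul_assoc, mul_left_comm (4 ^ p)] at hS
    by_cases hfew : #S ≤ 2 * #(relIn G.Adjᶜ q S)
    · obtain ⟨q', hq', W', hW', S', hS', hp', hcard'⟩ := hq.exists_step h (by omega)
      have hsub : insert q' (W' ∪ S') ⊆ insert q (W ∪ S) :=
        (insert_subset hq'.2.2 (union_subset (hW'.trans relIn_subset)
          ((hS'.trans relIn_subset).trans subset_union_right))).trans (subset_insert _ _)
      have hT' : W' ∪ S' ⊆ relIn G.Adjᶜ q T :=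
        union_subset (hW'.trans (relIn_mono hT)) (hS'.trans (relIn_mono hST))
      refine ⟨q', hT hq'.2.2, hq'.1, hq'.2.1,
        hp'.startsIndPath h p ?_ hT' (hL.trim hsub (hL.card_le hqA)) ?_⟩
      · rw [mul_left_comm]
        omega
      · rw [List.length_map]
        omega
    · have hsub : relIn G.Adj q S ⊆ insert q (W ∪ S) :=
        relIn_subset.trans (subset_union_right.trans (subset_insert _ _))
      obtain ⟨b, hb, hbp⟩ := (hL.trim hsub (hL.card_le hqA)).exists_startsIndPath h p (by omega)
        (by rw [List.length_map]; omega)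
      obtain ⟨hbS, hqb⟩ := mem_relIn.1 hb
      exact ⟨b, hST hbS, hq.lt b hbS, hqb, hbp⟩

theorem SparseChain.exists_startsIndPath (h : Linked G t K) (p : ℕ) {X T : Finset V}
    {L : List (Finset V)} (hL : SparseChain G K p X L T) (hX : t ≤ #X) (hp : p ≤ 2 * L.length) :
    ∃ b ∈ X, StartsIndPath G p T b := by
  match p, L with
  | 0, _ =>
    obtain ⟨b, hb⟩ := card_pos.1 (h.noHole.pos.trans_le hX)
    exact ⟨b, hb, trivial⟩
  | p + 1, [] => simp at hp
  | p + 1, S :: L =>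
    have hpos : K ≤ 4 ^ p * K := Nat.le_mul_of_pos_left _ (by positivity)
    have hXS : Before X S := ((List.pairwise_cons.1 hL.pairwise).1 S List.mem_cons_self).1
    have hS := hL.le_card S List.mem_cons_self
    have hST := hL.subset S List.mem_cons_self
    rw [pow_succ', mul_assoc, mul_left_comm (4 ^ p)] at hS
    obtain ⟨Z, hZ, hZc, hZb⟩ := exists_initial_segment S (a := K) (by omega)
    have hZS : Z ∪ S \ Z = S := union_sdiff_of_subset hZ
    obtain ⟨b, hb, hbr⟩ := h.launches X Z hX hZc.ge (hXS.mono subset_rfl hZ)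
    obtain ⟨hbS, hbL⟩ := List.forall_mem_cons.1 (hL.card_le hb)
    have hcard : #(relIn G.Adjᶜ b S) ≤ #(relIn G.Adjᶜ b (S \ Z)) + K := by
      rw [← hZc, relIn_sdiff]
      exact card_le_card_sdiff_add_card
    have hposed : Poised G t b Z (S \ Z) :=
      ⟨hbr, hZb, fun s hs => hXS b hb s (sdiff_subset hs)⟩
    obtain ⟨q, hq, W', hW', S', hS', hq', hcard'⟩ := hposed.exists_step h (by omega)
    rw [hZS] at hq hW'
    have hS'S : S' ⊆ relIn G.Adjᶜ b S := hS'.trans (relIn_mono sdiff_subset)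
    have hsub : insert q (W' ∪ S') ⊆ S :=
      insert_subset hq.2.2 ((union_subset hW' hS'S).trans relIn_subset)
    have hT' : W' ∪ S' ⊆ relIn G.Adjᶜ b T := (union_subset hW' hS'S).trans (relIn_mono hST)
    refine ⟨b, hb, q, hST hq.2.2, hq.1, hq.2.1,
      hq'.startsIndPath h p ?_ hT' (hL.tail.trim hsub hbL) ?_⟩
    · rw [mul_left_comm]
      omega
    · rw [List.length_map]
      rw [List.length_cons] at hp
      omega

end

end SparseChains

section Rich

variable {V : Type*} {P Q : V → V → Prop} {α β γ α' β' γ' : ℝ} {C D C' D' : Finset V}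

/-- A one-sided density condition: between any `X ⊆ C` and `Y ⊆ D` that contain at least the
proportions `α` and `β` of `C` and `D`, some vertex of `X` is in relation `P` to at least the
proportion `γ` of `Y`. -/
def Rich (P : V → V → Prop) (α β γ : ℝ) (C D : Finset V) : Prop :=
  ∀ X ⊆ C, α * #C ≤ #X → ∀ Y ⊆ D, β * #D ≤ #Y → ∃ a ∈ X, γ * #Y ≤ #(relIn P a Y)

lemma Rich.mono (h : Rich P α β γ C D) (hC : C' ⊆ C) (hD : D' ⊆ D) (hα : α * #C ≤ α' * #C')
    (hβ : β * #D ≤ β' * #D') : Rich P α' β' γ C' D' :=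
  fun X hX hXc Y hY hYc => h X (hX.trans hC) (hα.trans hXc) Y (hY.trans hD) (hβ.trans hYc)

lemma Rich.imp (h : Rich P α β γ C D) (hPQ : ∀ a b, P a b → Q a b) : Rich Q α β γ C D := by
  intro X hX hXc Y hY hYc
  obtain ⟨a, ha, hYa⟩ := h X hX hXc Y hY hYc
  refine ⟨a, ha, hYa.trans (Nat.cast_le.2 (card_le_card fun y hy => ?_))⟩
  exact mem_relIn.2 ⟨(mem_relIn.1 hy).1, hPQ _ _ (mem_relIn.1 hy).2⟩

lemma Rich.mono_right (h : Rich P α β γ C D) (hγ : γ' ≤ γ) : Rich P α β γ' C D := by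
  intro X hX hXc Y hY hYc
  obtain ⟨a, ha, hYa⟩ := h X hX hXc Y hY hYc
  exact ⟨a, ha, (mul_le_mul_of_nonneg_right hγ (Nat.cast_nonneg _)).trans hYa⟩

lemma rich_or_exists_sparse (P : V → V → Prop) (α β γ : ℝ) (C D : Finset V) :
    Rich P α β γ C D ∨ ∃ X ⊆ C, α * #C ≤ #X ∧ ∃ Y ⊆ D, β * #D ≤ #Y ∧
      ∀ a ∈ X, #(relIn P a Y) ≤ γ * #Y := by
  by_contra! h
  obtain ⟨hrich, h⟩ := h
  exact hrich fun X hX hXc Y hY hYc =>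
    let ⟨a, ha, hYa⟩ := h X hX hXc Y hY hYc
    ⟨a, ha, hYa.le⟩

lemma exists_halves {V : Type*} [LinearOrder V] {B : Finset V} (hB : 2 ≤ #B) :
    ∃ B₁ ⊆ B, ∃ B₂ ⊆ B, Before B₁ B₂ ∧ #B ≤ 3 * #B₁ ∧ #B ≤ 3 * #B₂ := by
  obtain ⟨B₁, hB₁, hB₁c, hB₁b⟩ := exists_initial_segment B (Nat.div_le_self #B 2)
  refine ⟨B₁, hB₁, B \ B₁, sdiff_subset, hB₁b, by omega, ?_⟩
  rw [card_sdiff_of_subset hB₁]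
  omega

lemma sparseTo_of_card_relIn_le {V : Type*} [LinearOrder V] {G : SimpleGraph V} {q : ℕ} {ρ γ : ℝ}
    {A Y S : Finset V} (hAY : Before A Y) (hS : S ⊆ Y) (hγ : q * γ ≤ ρ) (hSY : ρ * #Y ≤ #S)
    (hA : ∀ a ∈ A, (#(relIn G.Adj a Y) : ℝ) ≤ γ * #Y) : SparseTo G q A S := by
  refine ⟨hAY.mono subset_rfl hS, fun a ha => ?_⟩
  have hdeg : (q * #(relIn G.Adj a S) : ℝ) ≤ #S :=
    calc (q * #(relIn G.Adj a S) : ℝ) ≤ q * #(relIn G.Adj a Y) := by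
          gcongr
          exact relIn_mono hS
      _ ≤ q * (γ * #Y) := by gcongr; exact hA a ha
      _ = q * γ * #Y := by ring
      _ ≤ ρ * #Y := by gcongr
      _ ≤ #S := hSY
  exact_mod_cast hdeg

lemma exists_rich_halves_or_sparse_pair {V : Type*} [LinearOrder V] (P : V → V → Prop)
    (hα : 0 ≤ α) (hβ : 0 ≤ β) (γ : ℝ) {B : Finset V} (hB : 2 ≤ #B) :
    (∃ C ⊆ B, ∃ D ⊆ B, Before C D ∧ 1 / 3 * #B ≤ (#C : ℝ) ∧ 1 / 3 * #B ≤ (#D : ℝ) ∧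
      Rich P α β γ C D) ∨
    ∃ X ⊆ B, ∃ Y ⊆ B, Before X Y ∧ α / 3 * #B ≤ #X ∧ β / 3 * #B ≤ #Y ∧
      ∀ a ∈ X, #(relIn P a Y) ≤ γ * #Y := by
  obtain ⟨C, hC, D, hD, hCD, hCc, hDc⟩ := exists_halves hB
  replace hCc : 1 / 3 * #B ≤ (#C : ℝ) := by
    rw [one_div_mul_eq_div, div_le_iff₀' three_pos]
    exact_mod_cast hCc
  replace hDc : 1 / 3 * #B ≤ (#D : ℝ) := by
    rw [one_div_mul_eq_div, div_le_iff₀' three_pos]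
    exact_mod_cast hDc
  refine (rich_or_exists_sparse P α β γ C D).imp (fun h => ⟨C, hC, D, hD, hCD, hCc, hDc, h⟩) ?_
  rintro ⟨X, hX, hXc, Y, hY, hYc, h⟩
  refine ⟨X, hX.trans hC, Y, hY.trans hD, hCD.mono hX hY, ?_, ?_, h⟩
  · calc α / 3 * #B = α * (1 / 3 * #B) := by ring
      _ ≤ α * #C := by gcongr
      _ ≤ #X := hXc
  · calc β / 3 * #B = β * (1 / 3 * #B) := by ring
      _ ≤ β * #D := by gcongr
      _ ≤ #Y := hYc

lemma exists_rich_or_sparse_list {q : ℕ} (hq : 0 < q) (hα : 0 < α) (hβ : 0 < β) (m : ℕ) :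
    ∃ ρ γ C₀ : ℝ, 0 < ρ ∧ 0 < γ ∧ ∀ {V : Type*} [LinearOrder V] (G : SimpleGraph V)
      (B : Finset V), C₀ ≤ #B →
      (∃ C ⊆ B, ∃ D ⊆ B, Before C D ∧ ρ * #B ≤ #C ∧ ρ * #B ≤ #D ∧ Rich G.Adj α β γ C D) ∨
      ∃ L : List (Finset V), L.length = m ∧ (∀ S ∈ L, S ⊆ B ∧ ρ * #B ≤ #S) ∧
        L.Pairwise (SparseTo G q) := by
  induction m with
  | zero => exact ⟨1, 1, 0, one_pos, one_pos, fun _ _ _ => Or.inr ⟨[], rfl, by simp, .nil⟩⟩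
  | succ m ih =>
    obtain ⟨ρ', γ', C', hρ', hγ', ih⟩ := ih
    obtain ⟨ρ, hρ, hρ₁, hρ₂, hρ₃⟩ : ∃ ρ > 0, ρ ≤ 1 / 3 ∧ ρ ≤ α / 3 ∧ ρ ≤ ρ' * (β / 3) :=
      ⟨min (1 / 3) (min (α / 3) (ρ' * (β / 3))), by positivity, by simp, by simp, by simp⟩
    refine ⟨ρ, min γ' (ρ' / q), max 2 (C' / (β / 3)), hρ, by positivity, fun G B hB => ?_⟩
    have hC'B : C' ≤ β / 3 * #B := by
      rw [mul_comm, ← div_le_iff₀ (by positivity)]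
      exact (le_max_right _ _).trans hB
    rcases exists_rich_halves_or_sparse_pair G.Adj hα.le hβ.le (min γ' (ρ' / q))
      (by exact_mod_cast (le_max_left _ _).trans hB) with
      ⟨C, hC, D, hD, hCD, hCc, hDc, hr⟩ | ⟨X, hX, Y, hY, hXY, hXc, hYc, hsparse⟩
    · exact Or.inl ⟨C, hC, D, hD, hCD, le_trans (by gcongr) hCc, le_trans (by gcongr) hDc, hr⟩
    have hYB : ρ * #B ≤ ρ' * #Y :=
      calc ρ * #B ≤ ρ' * (β / 3) * #B := by gcongr
        _ = ρ' * (β / 3 * #B) := by ring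
        _ ≤ ρ' * #Y := by gcongr
    rcases ih G Y (hC'B.trans hYc) with ⟨C, hC, D, hD, hCD, hCc, hDc, hr⟩ | ⟨L, hL, hLs, hLp⟩
    · exact Or.inl ⟨C, hC.trans hY, D, hD.trans hY, hCD, hYB.trans hCc, hYB.trans hDc,
        hr.mono_right (min_le_left _ _)⟩
    refine Or.inr ⟨X :: L, by simp [hL], ?_, List.pairwise_cons.2 ⟨fun S hS => ?_, hLp⟩⟩
    · exact List.forall_mem_cons.2 ⟨⟨hX, le_trans (by gcongr) hXc⟩,
        fun S hS => ⟨(hLs S hS).1.trans hY, hYB.trans (hLs S hS).2⟩⟩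
    · refine sparseTo_of_card_relIn_le hXY (hLs S hS).1 ?_ (hLs S hS).2 hsparse
      rw [mul_comm, ← le_div_iff₀ (by exact_mod_cast hq)]
      exact min_le_right _ _

lemma exists_rich_pair (p : ℕ) (hα : 0 < α) (hβ : 0 < β) :
    ∃ ρ γ C₀ : ℝ, 0 < ρ ∧ 0 < γ ∧ ∀ {V : Type*} [LinearOrder V] (G : SimpleGraph V) (t K : ℕ),
      Linked G t K → (∀ T v, ¬ StartsIndPath G p T v) → ∀ B : Finset V, C₀ * K ≤ #B →
      ∃ C ⊆ B, ∃ D ⊆ B, Before C D ∧ ρ * #B ≤ #C ∧ ρ * #B ≤ #D ∧ Rich G.Adj α β γ C D := by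
  obtain ⟨ρ, γ, C', hρ, hγ, H⟩ :=
    exists_rich_or_sparse_list (q := 4 ^ p) (by positivity) hα hβ (p + 1)
  refine ⟨ρ, γ, max (max C' 0) (4 ^ p * 3 / ρ), hρ, hγ, fun G t K hG hfree B hB => ?_⟩
  have hK : (1 : ℝ) ≤ K := by exact_mod_cast hG.noHole.pos.trans_le hG.le
  have hB₁ : C' ≤ #B :=
    calc C' ≤ max C' 0 * 1 := by simp
      _ ≤ max (max C' 0) (4 ^ p * 3 / ρ) * K :=
        mul_le_mul (le_max_left _ _) hK zero_le_one (le_max_of_le_left (le_max_right _ _))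
      _ ≤ #B := hB
  have hB₂ : 4 ^ p * (3 * K) ≤ ρ * #B :=
    calc (4 : ℝ) ^ p * (3 * K) = ρ * (4 ^ p * 3 / ρ * K) := by field_simp
      _ ≤ ρ * #B := by
        gcongr
        refine le_trans ?_ hB
        gcongr
        exact le_max_right _ _
  refine (H G B hB₁).resolve_right ?_
  rintro ⟨_ | ⟨X, L⟩, hL, hLs, hLp⟩
  · simp at hL
  have hLc : ∀ S ∈ X :: L, 4 ^ p * (3 * K) ≤ #S := fun S hS => by
    exact_mod_cast hB₂.trans (hLs S hS).2
  have hchain : SparseChain G K p X L B :=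
    ⟨hLp, (List.forall_mem_cons.1 hLc).2, fun S hS => (hLs S (List.mem_cons_of_mem _ hS)).1⟩
  have hX : t ≤ #X := by
    have hKX := hLc X List.mem_cons_self
    have hpos : 3 * K ≤ 4 ^ p * (3 * K) := Nat.le_mul_of_pos_left _ (by positivity)
    have := hG.le
    omega
  obtain ⟨b, -, hb⟩ := hchain.exists_startsIndPath hG p hX
    (by rw [List.length_cons] at hL; omega)
  exact hfree B b hb

lemma exists_rich_or_sparse {β δ : ℝ} (hα : 0 < α) (hβ₁ : β ≤ 1) (I : Finset ℕ) :
    ∃ ρ : ℝ, 0 < ρ ∧ ∀ {V : Type*} (P : V → V → Prop) (B : Finset V) (C : ℕ → Finset V),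
      ∃ B' ⊆ B, ∃ C' : ℕ → Finset V, ρ * #B ≤ #B' ∧ (∀ l, C' l ⊆ C l ∧ β * #(C l) ≤ #(C' l)) ∧
        ∀ l ∈ I, Rich P α β δ B' (C' l) ∨ ∀ b ∈ B', #(relIn P b (C' l)) ≤ δ * #(C' l) := by
  have hself : ∀ c : ℕ, β * c ≤ c := fun c => mul_le_of_le_one_left (Nat.cast_nonneg _) hβ₁
  induction I using Finset.induction_on with
  | empty => exact ⟨1, one_pos, fun P B C => ⟨B, subset_rfl, C, by simp, by simp [hself], by simp⟩⟩
  | insert i I hi ih =>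
    obtain ⟨ρ, hρ, ih⟩ := ih
    refine ⟨min (ρ * (α * ρ)) ρ, by positivity, fun P B C => ?_⟩
    rcases rich_or_exists_sparse P (α * ρ) β δ B (C i) with
      hrich | ⟨X, hX, hXc, Y, hY, hYc, hXY⟩
    · obtain ⟨B', hB', C', hB'c, hC', hrel⟩ := ih P B C
      refine ⟨B', hB', Function.update C' i (C i), ?_, fun l => ?_, fun l hl => ?_⟩
      · exact le_trans (by gcongr; exact min_le_right _ _) hB'c
      · rcases eq_or_ne l i with rfl | hli
        · simp [hself]
        · simpa [hli] using hC' l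
      · rcases eq_or_ne l i with rfl | hli
        · rw [Function.update_self]
          refine Or.inl (hrich.mono hB' subset_rfl ?_ le_rfl)
          rw [mul_assoc]
          gcongr
        · rw [Function.update_of_ne hli]
          exact hrel l (mem_of_mem_insert_of_ne hl hli)
    · obtain ⟨B', hB', C', hB'c, hC', hrel⟩ := ih P X C
      refine ⟨B', hB'.trans hX, Function.update C' i Y, ?_, fun l => ?_, fun l hl => ?_⟩
      · calc min (ρ * (α * ρ)) ρ * #B ≤ ρ * (α * ρ) * #B := by gcongr; exact min_le_left _ _
          _ = ρ * (α * ρ * #B) := by ring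
          _ ≤ ρ * #X := by gcongr
          _ ≤ #B' := hB'c
      · rcases eq_or_ne l i with rfl | hli
        · simpa using ⟨hY, hYc⟩
        · simpa [hli] using hC' l
      · rcases eq_or_ne l i with rfl | hli
        · rw [Function.update_self]
          exact Or.inr fun b hb => hXY b (hB' hb)
        · rw [Function.update_of_ne hli]
          exact hrel l (mem_of_mem_insert_of_ne hl hli)

end Rich

section Clusters

variable {α β δ θ γ₁ γ₂ τ : ℝ}

lemma exists_cluster (p : ℕ) (hα : 0 < α) (hβ : 0 < β) :
    ∃ γ : ℝ, 0 < γ ∧ ∀ {α' β' : ℝ} (δ : ℝ), 0 < α' → β' ≤ 1 → ∀ I : Finset ℕ,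
      ∃ ρ C₀ : ℝ, 0 < ρ ∧ ∀ {V : Type*} [LinearOrder V] (G : SimpleGraph V) (t K : ℕ),
      Linked G t K → (∀ T v, ¬ StartsIndPath G p T v) →
      ∀ (B : Finset V) (A : ℕ → Finset V), C₀ * K ≤ #B →
      ∃ C ⊆ B, ∃ D ⊆ B, ∃ A' : ℕ → Finset V, Before C D ∧ ρ * #B ≤ #C ∧ ρ * #B ≤ #D ∧
        Rich G.Adj α β γ C D ∧ (∀ l, A' l ⊆ A l ∧ β' * #(A l) ≤ #(A' l)) ∧
        ∀ l ∈ I, Rich G.Adj α' β' δ D (A' l) ∨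
          ∀ b ∈ C ∪ D, #(relIn G.Adj b (A' l)) ≤ δ * #(A' l) := by
  obtain ⟨ρ₀, γ, C₀, hρ₀, hγ, hpair⟩ := exists_rich_pair p hα hβ
  refine ⟨γ, hγ, fun {α' β'} δ hα' hβ' I => ?_⟩
  obtain ⟨ρ₁, hρ₁, hcross⟩ := exists_rich_or_sparse (δ := δ) (mul_pos hα' hρ₀) hβ' I
  refine ⟨ρ₀ * ρ₁, C₀ / ρ₁, by positivity, fun {V} _ G t K hG hfree B A hB => ?_⟩
  obtain ⟨B', hB', A', hB'c, hA', hrel⟩ := hcross G.Adj B A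
  have hB'K : C₀ * K ≤ #B' :=
    calc C₀ * K = ρ₁ * (C₀ / ρ₁ * K) := by field_simp
      _ ≤ ρ₁ * #B := by gcongr
      _ ≤ #B' := hB'c
  obtain ⟨C, hC, D, hD, hCD, hCc, hDc, hrich⟩ := hpair G t K hG hfree B' hB'K
  have hρ : ρ₀ * ρ₁ * #B ≤ ρ₀ * #B' := by
    rw [mul_assoc]
    gcongr
  refine ⟨C, hC.trans hB', D, hD.trans hB', A', hCD, hρ.trans hCc, hρ.trans hDc, hrich, hA',
    fun l hl => (hrel l hl).imp (fun h => h.mono hD subset_rfl ?_ le_rfl)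
      fun h b hb => h b (union_subset hC hD hb)⟩
  rw [mul_assoc]
  gcongr

/-- Pairs `C i`, `D i` with `i < r`, rich within each pair, and such that each pair is either rich
or sparse towards each later set `C l` with `l < R`. The richness parameters are chosen such that
an induced path entering `C i` with a proportion `γ₂ * θ` of `C i` still available can pass through
a proportion `γ₁ * θ` of `D i` to a proportion `γ₂ * θ` of `C l`. -/
structure Clusters {V : Type*} [LinearOrder V] (G : SimpleGraph V) (θ γ₁ γ₂ δ : ℝ) (r R : ℕ)
    (C D : ℕ → Finset V) : Prop where
  before : ∀ i < r, Before (C i) (D i)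
  rich : ∀ i < r, Rich G.Adj (γ₂ * θ / 2) θ γ₁ (C i) (D i)
  rich_or_sparse : ∀ i < r, ∀ l < R, i < l → Rich G.Adj (γ₁ * θ / 2) θ γ₂ (D i) (C l) ∨
    ∀ b ∈ C i ∪ D i, #(relIn G.Adj b (C l)) ≤ δ * #(C l)

lemma Clusters.succ {V : Type*} [LinearOrder V] {G : SimpleGraph V} {r R : ℕ}
    {A C D : ℕ → Finset V} {F : Finset V} (h : Clusters G θ γ₁ γ₂ δ r R C D)
    (hγ₂ : 0 ≤ γ₂) (hθ : 0 ≤ θ) (hδ : 0 ≤ δ) (hγ₂δ : γ₂ ≤ δ * τ) (hAF : Before (A r) F)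
    (hrich : Rich G.Adj (γ₂ * θ / 2 * τ) θ γ₁ (A r) F)
    (hsparse : ∀ l < R, r < l → Rich G.Adj (γ₁ * θ / 2) (θ * τ) (δ * τ) F (A l) ∨
      ∀ b ∈ A r ∪ F, #(relIn G.Adj b (A l)) ≤ δ * τ * #(A l))
    (hCA : ∀ l ≥ r, C l ⊆ A l ∧ τ * #(A l) ≤ #(C l)) :
    Clusters G θ γ₁ γ₂ δ (r + 1) R C (Function.update D r F) := by
  obtain ⟨hCr, hCrc⟩ := hCA r le_rfl
  refine ⟨fun i hi => ?_, fun i hi => ?_, fun i hi l hl hil => ?_⟩ <;>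
    rcases (Nat.lt_succ_iff_lt_or_eq.1 hi) with hi | rfl
  · rw [Function.update_of_ne hi.ne]
    exact h.before i hi
  · rw [Function.update_self]
    exact hAF.mono hCr subset_rfl
  · rw [Function.update_of_ne hi.ne]
    exact h.rich i hi
  · rw [Function.update_self]
    refine hrich.mono hCr subset_rfl ?_ le_rfl
    rw [mul_assoc]
    gcongr
  · rw [Function.update_of_ne hi.ne]
    exact h.rich_or_sparse i hi l hl hil
  · rw [Function.update_self]
    obtain ⟨hCl, hClc⟩ := hCA l hil.le
    rcases hsparse l hl hil with h | h
    · refine Or.inl ((h.mono subset_rfl hCl le_rfl ?_).mono_right hγ₂δ)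
      rw [mul_assoc]
      gcongr
    · refine Or.inr fun b hb => ?_
      calc (#(relIn G.Adj b (C l)) : ℝ) ≤ #(relIn G.Adj b (A l)) := by
            gcongr
            exact relIn_mono hCl
        _ ≤ δ * τ * #(A l) := h b (union_subset_union_left hCr hb)
        _ = δ * (τ * #(A l)) := mul_assoc _ _ _
        _ ≤ δ * #(C l) := by gcongr

/-- Clusters chosen inside the sets `B i`, of which they contain at least a proportion `ρ`, together
with large subsets `C l` of the sets `A l` with `r ≤ l` that remain to be made into clusters. -/
structure TargetedClusters {V : Type*} [LinearOrder V] (G : SimpleGraph V) (θ γ₁ γ₂ δ ρ : ℝ)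
    (r R : ℕ) (B A C D : ℕ → Finset V) : Prop extends Clusters G θ γ₁ γ₂ δ r R C D where
  subset_left : ∀ i < r, C i ⊆ B i
  subset_right : ∀ i < r, D i ⊆ B i
  le_card_left : ∀ i < r, ρ * #(B i) ≤ #(C i)
  le_card_right : ∀ i < r, ρ * #(B i) ≤ #(D i)
  target : ∀ l ≥ r, C l ⊆ A l ∧ θ ^ (2 ^ r - 1) * #(A l) ≤ #(C l)

lemma pow_two_pow_succ_sub_one (θ : ℝ) (r : ℕ) :
    θ ^ (2 ^ (r + 1) - 1) = θ ^ (2 ^ r - 1) * (θ * θ ^ (2 ^ r - 1)) := by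
  rw [← pow_succ', ← pow_add]
  congr 1
  have := Nat.one_le_two_pow (n := r)
  omega

lemma TargetedClusters.succ {V : Type*} [LinearOrder V] {G : SimpleGraph V} {ρ ρ' : ℝ} {r R : ℕ}
    {B A A' C D : ℕ → Finset V} {F : Finset V}
    (h : TargetedClusters G θ γ₁ γ₂ δ ρ r R B A' C D)
    (hclusters : Clusters G θ γ₁ γ₂ δ (r + 1) R C (Function.update D r F))
    (hρ' : 0 ≤ ρ') (hθ : 0 ≤ θ) (hθ₁ : θ ≤ 1) (hA'B : A' r ⊆ B r) (hFB : F ⊆ B r)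
    (hA'c : ρ' * #(B r) ≤ #(A' r)) (hFc : ρ' * #(B r) ≤ #F)
    (hA' : ∀ l > r, A' l ⊆ A l ∧ θ * θ ^ (2 ^ r - 1) * #(A l) ≤ #(A' l)) :
    TargetedClusters G θ γ₁ γ₂ δ (min ρ (θ ^ (2 ^ r - 1) * ρ')) (r + 1) R B A C
      (Function.update D r F) := by
  obtain ⟨hCr, hCrc⟩ := h.target r le_rfl
  have hmin (c : ℕ) : min ρ (θ ^ (2 ^ r - 1) * ρ') * c ≤ ρ * c := by
    gcongr
    exact min_le_left _ _
  have hmin' (c : ℕ) : min ρ (θ ^ (2 ^ r - 1) * ρ') * c ≤ θ ^ (2 ^ r - 1) * (ρ' * c) := by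
    rw [← mul_assoc]
    gcongr
    exact min_le_right _ _
  refine ⟨hclusters, ?_, ?_, ?_, ?_, fun l hl => ?_⟩
  on_goal 5 =>
    obtain ⟨hCl, hClc⟩ := h.target l (r.le_succ.trans hl)
    refine ⟨hCl.trans (hA' l hl).1, ?_⟩
    rw [pow_two_pow_succ_sub_one, mul_assoc]
    exact le_trans (by gcongr; exact (hA' l hl).2) hClc
  all_goals
    intro i hi
    rcases Nat.lt_succ_iff_lt_or_eq.1 hi with hi | rfl
  · exact h.subset_left i hi
  · exact hCr.trans hA'B
  · simpa [hi.ne] using h.subset_right i hi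
  · simpa using hFB
  · exact (hmin _).trans (h.le_card_left i hi)
  · exact (hmin' _).trans (le_trans (by gcongr) hCrc)
  · simpa [hi.ne] using (hmin _).trans (h.le_card_right i hi)
  · rw [Function.update_self]
    exact (hmin' _).trans
      ((mul_le_of_le_one_left (by positivity) (pow_le_one₀ hθ hθ₁)).trans hFc)

-- Pairs are chosen from the last one to the first. The exponent of `θ` in `TargetedClusters`
-- accounts for the shrinking: the choice of `C r` and `D r` must leave room for `C r` and the later
-- sets to shrink in all subsequent choices.
lemma exists_targetedClusters (p R : ℕ) (hθ : 0 < θ) (hθ₁ : θ ≤ 1) (hδ : 0 < δ) :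
    ∃ γ₁ γ₂ : ℝ, 0 < γ₁ ∧ 0 < γ₂ ∧ γ₂ ≤ δ ∧ ∀ r ≤ R,
      ∃ ρ C₀ : ℝ, 0 < ρ ∧ ∀ {V : Type*} [LinearOrder V] (G : SimpleGraph V) (t K : ℕ),
      Linked G t K → (∀ T v, ¬ StartsIndPath G p T v) →
      ∀ B A : ℕ → Finset V, (∀ i < r, C₀ * K ≤ #(B i)) →
      ∃ C D : ℕ → Finset V, TargetedClusters G θ γ₁ γ₂ δ ρ r R B A C D := by
  obtain ⟨γ₂, hγ₂, hγ₂δ⟩ : ∃ γ₂ > 0, γ₂ = δ * θ ^ (2 ^ R - 1) := ⟨_, by positivity, rfl⟩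
  obtain ⟨γ₁, hγ₁, hcluster⟩ := exists_cluster p (α := γ₂ * θ / 2 * θ ^ (2 ^ R - 1)) (β := θ)
    (by positivity) hθ
  refine ⟨γ₁, γ₂, hγ₁, hγ₂,
    hγ₂δ.trans_le (mul_le_of_le_one_right hδ.le (pow_le_one₀ hθ.le hθ₁)), fun r => ?_⟩
  induction r with
  | zero =>
    exact fun _ => ⟨1, 0, one_pos, fun G t K _ _ B A _ => ⟨A, A, ⟨by simp, by simp, by simp⟩,
      by simp, by simp, by simp, by simp, by simp⟩⟩
  | succ r ih =>
    intro hr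
    obtain ⟨ρ, C₀, hρ, ih⟩ := ih (by omega)
    have hθr : θ ^ (2 ^ R - 1) ≤ θ ^ (2 ^ r - 1) := pow_le_pow_of_le_one hθ.le hθ₁
      (Nat.sub_le_sub_right (Nat.pow_le_pow_right two_pos (by omega)) 1)
    obtain ⟨ρ', C₀', hρ', hcluster⟩ := hcluster (α' := γ₁ * θ / 2)
      (β' := θ * θ ^ (2 ^ r - 1)) (δ * θ ^ (2 ^ r - 1)) (by positivity)
      (mul_le_one₀ hθ₁ (by positivity) (pow_le_one₀ hθ.le hθ₁)) (Finset.Ioo r R)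
    refine ⟨min ρ (θ ^ (2 ^ r - 1) * ρ'), max C₀ C₀', by positivity,
      fun G t K hG hfree B A hB => ?_⟩
    obtain ⟨E, hE, F, hF, A', hEF, hEc, hFc, hrich, hA', hrel⟩ :=
      hcluster G t K hG hfree (B r) A (le_trans (by gcongr; simp) (hB r (by omega)))
    obtain ⟨C, D, hCD⟩ := ih G t K hG hfree B (Function.update A' r E)
      fun i hi => le_trans (by gcongr; simp) (hB i (by omega))
    have hclusters : Clusters G θ γ₁ γ₂ δ (r + 1) R C (Function.update D r F) := by
      refine hCD.toClusters.succ hγ₂.le hθ.le hδ.le (hγ₂δ.trans_le (by gcongr)) ?_ ?_ ?_ hCD.target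
      · rwa [Function.update_self]
      · rw [Function.update_self]
        exact hrich.mono subset_rfl subset_rfl (by gcongr) le_rfl
      · intro l hl hrl
        rw [Function.update_self, Function.update_of_ne hrl.ne']
        exact hrel l (by simp [hl, hrl])
    refine ⟨C, _, hCD.succ hclusters hρ'.le hθ.le hθ₁ ?_ hF ?_ hFc fun l hl => ?_⟩
    · rwa [Function.update_self]
    · rwa [Function.update_self]
    · rw [Function.update_of_ne hl.ne']
      exact hA' l

end Clusters

section Routes

variable {red : ℕ → ℕ → Prop} {S S' : Finset ℕ} {m u : ℕ}

/-- `Route red S m u`: from `u` one can follow increasing red pairs of `S` and finally switch to an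
increasing sequence of `S` without red pairs, making `m` steps in total. -/
inductive Route (red : ℕ → ℕ → Prop) (S : Finset ℕ) : ℕ → ℕ → Prop
  | sparse {z : ℕ} {L : List ℕ} : (∀ x ∈ z :: L, x ∈ S) →
      (z :: L).Pairwise (fun i j => i < j ∧ ¬ red i j) → Route red S L.length z
  | step {m u v : ℕ} : u ∈ S → u < v → red u v → Route red S m v → Route red S (m + 1) u

lemma Route.mem (h : Route red S m u) : u ∈ S := by
  cases h with
  | sparse hS _ => exact hS _ List.mem_cons_self
  | step hu _ _ _ => exact hu

lemma Route.mono (h : Route red S m u) (hS : S ⊆ S') : Route red S' m u := by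
  induction h with
  | sparse hL hp => exact .sparse (fun x hx => hS (hL x hx)) hp
  | step hu huv hred _ ih => exact .step (hS hu) huv hred ih

lemma exists_route (red : ℕ → ℕ → Prop) {k : ℕ} (hS : (k + 1).choose 2 + 1 ≤ #S) :
    ∃ u, Route red S k u := by
  classical
  induction k generalizing S with
  | zero =>
    obtain ⟨z, hz⟩ := card_pos.1 (Nat.lt_of_lt_of_le (by simp) hS)
    exact ⟨z, .sparse (L := []) (by simpa using hz) (List.pairwise_singleton _ _)⟩
  | succ k ih =>
    let S₀ := {x ∈ S | ∀ u ∈ S, u < x → ¬ red u x}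
    by_cases hS₀ : k + 2 ≤ #S₀
    · obtain ⟨S₁, hS₁, hS₁c⟩ := exists_subset_card_eq hS₀
      obtain ⟨z, L, hzL⟩ : ∃ z L, S₁.sort (· ≤ ·) = z :: L :=
        List.exists_cons_of_length_pos (by simp [hS₁c])
      have hL : L.length = k + 1 := by
        have := S₁.length_sort (· ≤ ·)
        rw [hzL, List.length_cons] at this
        omega
      have hmem : ∀ x ∈ z :: L, x ∈ S₀ := fun x hx => hS₁ ((mem_sort _).1 (hzL ▸ hx))
      have hsorted : (z :: L).Pairwise (· < ·) := hzL ▸ S₁.sortedLT_sort.pairwise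
      refine ⟨z, hL ▸ .sparse (fun x hx => (mem_filter.1 (hmem x hx)).1) ?_⟩
      exact hsorted.imp_of_mem fun hi hj hij =>
        ⟨hij, (mem_filter.1 (hmem _ hj)).2 _ (mem_filter.1 (hmem _ hi)).1 hij⟩
    · have hcard : (k + 1).choose 2 + 1 ≤ #(S \ S₀) := by
        have hchoose : (k + 2).choose 2 = (k + 1) + (k + 1).choose 2 := by
          rw [Nat.choose_succ_succ', Nat.choose_one_right]
        rw [hchoose] at hS
        have hsplit : #(S \ S₀) + #S₀ = #S := card_sdiff_add_card_eq_card (filter_subset _ _)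
        omega
      obtain ⟨v, hv⟩ := ih hcard
      obtain ⟨hvS, hvS₀⟩ := mem_sdiff.1 hv.mem
      obtain ⟨u, hu, huv, hred⟩ : ∃ u ∈ S, u < v ∧ red u v := by
        simpa [S₀, hvS] using hvS₀
      exact ⟨u, .step hu huv hred (hv.mono sdiff_subset)⟩

end Routes

section Walk

variable {V : Type*} [LinearOrder V] {G : SimpleGraph V} {α γ δ η θ β : ℝ} {n a b p : ℕ}
  {E : ℕ → Finset V}

/-- Sets `E 0, …, E (n - 1)` in increasing order that are rich in non-adjacent pairs, except
possibly between consecutive sets. -/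
structure PathFrame (G : SimpleGraph V) (η θ δ : ℝ) (n : ℕ) (E : ℕ → Finset V) : Prop where
  before : ∀ a b, a < b → b < n → Before (E a) (E b)
  rich_compl : ∀ a b, a + 1 < b → b < n → Rich G.Adjᶜ η θ δ (E a) (E b)

/-- `T` contains a proportion `δ ^ a` of each set after `E a`. -/
def LargeAfter (δ : ℝ) (n : ℕ) (E : ℕ → Finset V) (a : ℕ) (T : Finset V) : Prop :=
  ∀ c, a < c → c < n → δ ^ a * #(E c) ≤ #(E c ∩ T)

/-- However a proportion `β` of `E a` and a sufficiently large part `T` of the later sets are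
chosen, an induced monotone path with `p` edges starts in the former and continues in `T`. -/
def HasStarts (G : SimpleGraph V) (δ : ℝ) (n : ℕ) (E : ℕ → Finset V) (β : ℝ) (p a : ℕ) : Prop :=
  ∀ X ⊆ E a, β * #(E a) ≤ #X → ∀ T, LargeAfter δ n E a T → ∃ x ∈ X, StartsIndPath G p T x

lemma LargeAfter.le_card_inter {c : ℕ} {T : Finset V}
    (h : LargeAfter δ n E a T) (hδ : 0 ≤ δ) (hδ₁ : δ ≤ 1) (hθ : θ ≤ δ ^ n) (hac : a < c)
    (hcn : c < n) : θ * #(E c) ≤ #(E c ∩ T) :=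
  (mul_le_mul_of_nonneg_right (hθ.trans (pow_le_pow_of_le_one hδ hδ₁ (hac.trans hcn).le))
    (Nat.cast_nonneg _)).trans (h c hac hcn)

lemma Rich.card_filter_le {V : Type*} {P : V → V → Prop} {C D X Y : Finset V}
    (h : Rich P η θ δ C D) (hX : X ⊆ C) (hY : Y ⊆ D) (hYc : θ * #D ≤ #Y) :
    #{x ∈ X | #(relIn P x Y) < δ * #Y} ≤ η * #C := by
  by_contra! hlt
  obtain ⟨x, hx, hxY⟩ := h _ ((filter_subset _ _).trans hX) hlt.le Y hY hYc
  exact (mem_filter.1 hx).2.not_ge hxY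

lemma PathFrame.exists_good_subset (h : PathFrame G η θ δ n E) (hη : 0 ≤ η) (hα : n * η ≤ α)
    (hab : a < b) {X T : Finset V} (hX : X ⊆ E a) (hXc : 2 * α * #(E a) ≤ #X)
    (hT : ∀ c, b < c → c < n → θ * #(E c) ≤ #(E c ∩ T)) :
    ∃ X' ⊆ X, α * #(E a) ≤ #X' ∧
      ∀ x ∈ X', ∀ c, b < c → c < n → δ * #(E c ∩ T) ≤ #(relIn G.Adjᶜ x (E c ∩ T)) := by
  let bad (c : ℕ) : Finset V := {x ∈ X | #(relIn G.Adjᶜ x (E c ∩ T)) < δ * #(E c ∩ T)}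
  have hbad : ∀ c ∈ Ioo b n, (#(bad c) : ℝ) ≤ η * #(E a) := fun c hc =>
    (h.rich_compl a c (by grind) (mem_Ioo.1 hc).2).card_filter_le hX inter_subset_left
      (hT c (mem_Ioo.1 hc).1 (mem_Ioo.1 hc).2)
  have hunion : (#((Ioo b n).biUnion bad) : ℝ) ≤ α * #(E a) :=
    calc (#((Ioo b n).biUnion bad) : ℝ) ≤ ∑ c ∈ Ioo b n, (#(bad c) : ℝ) := by
          exact_mod_cast card_biUnion_le
      _ ≤ #(Ioo b n) * (η * #(E a)) := by
          simpa using sum_le_card_nsmul _ _ _ hbad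
      _ ≤ n * (η * #(E a)) := by
          gcongr
          rw [Nat.card_Ioo]
          omega
      _ = n * η * #(E a) := by ring
      _ ≤ α * #(E a) := by gcongr
  refine ⟨X \ (Ioo b n).biUnion bad, sdiff_subset, ?_, fun x hx c hbc hcn => ?_⟩
  · have hsdiff : (#X : ℝ) ≤ #(X \ (Ioo b n).biUnion bad) + #((Ioo b n).biUnion bad) := by
      exact_mod_cast card_le_card_sdiff_add_card
    linarith
  · obtain ⟨hxX, hxb⟩ := mem_sdiff.1 hx
    by_contra! hlt
    exact hxb (mem_biUnion.2 ⟨c, mem_Ioo.2 ⟨hbc, hcn⟩, mem_filter.2 ⟨hxX, hlt⟩⟩)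

lemma PathFrame.hasStarts_succ (h : PathFrame G η θ δ n E) (hη : 0 ≤ η) (hδ : 0 ≤ δ) (hδ₁ : δ ≤ 1)
    (hθ : θ ≤ δ ^ n) (hα : n * η ≤ α) (hγ : 0 ≤ γ) (hab : a < b) (hbn : b < n)
    (hrich : Rich G.Adj α θ γ (E a) (E b)) (hb : HasStarts G δ n E (γ * θ) p b) :
    HasStarts G δ n E (2 * α) (p + 1) a := by
  intro X hX hXc T hT
  have hTθ : ∀ c, a < c → c < n → θ * #(E c) ≤ #(E c ∩ T) := fun c hac =>
    hT.le_card_inter hδ hδ₁ hθ hac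
  obtain ⟨X', hX', hX'c, hgood⟩ := h.exists_good_subset hη hα hab hX hXc
    fun c hbc => hTθ c (hab.trans hbc)
  obtain ⟨x, hx, hxb⟩ := hrich X' (hX'.trans hX) hX'c _ inter_subset_left (hTθ b hab hbn)
  have hnext : γ * θ * #(E b) ≤ #(relIn G.Adj x (E b ∩ T)) := by
    rw [mul_assoc]
    exact le_trans (by gcongr; exact hTθ b hab hbn) hxb
  have hrest : LargeAfter δ n E b (relIn G.Adjᶜ x T) := fun c hbc hcn =>
    calc δ ^ b * #(E c) ≤ δ ^ (a + 1) * #(E c) := by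
          exact mul_le_mul_of_nonneg_right (pow_le_pow_of_le_one hδ hδ₁ hab) (Nat.cast_nonneg _)
      _ = δ * (δ ^ a * #(E c)) := by ring
      _ ≤ δ * #(E c ∩ T) := by
          gcongr
          exact hT c (hab.trans hbc) hcn
      _ ≤ #(E c ∩ relIn G.Adjᶜ x T) := by
          rw [← relIn_inter]
          exact hgood x hx c hbc hcn
  obtain ⟨y, hy, hyp⟩ := hb _ (relIn_subset.trans inter_subset_left) hnext _ hrest
  obtain ⟨hyE, hyT⟩ := mem_inter.1 (relIn_subset hy)
  exact ⟨x, hX' hx, y, hyT, h.before a b hab hbn x (hX (hX' hx)) y hyE, (mem_relIn.1 hy).2, hyp⟩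

end Walk

section Interleave

variable {α : Type*} {C D : ℕ → α}

/-- The sequence `C 0, D 0, C 1, D 1, …`. -/
def interleave (C D : ℕ → α) (a : ℕ) : α :=
  if Even a then C (a / 2) else D (a / 2)

lemma interleave_two_mul (i : ℕ) : interleave C D (2 * i) = C i := by
  simp [interleave]

lemma interleave_two_mul_add_one (i : ℕ) : interleave C D (2 * i + 1) = D i := by
  simp [interleave, Nat.mul_add_div]

end Interleave

section Traversal

variable {V : Type*} [LinearOrder V] {G : SimpleGraph V} {γ₁ γ₂ δ η θ σ : ℝ} {R k m z u t K : ℕ}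
  {C D : ℕ → Finset V}

lemma Clusters.hasStarts_of_sparse (h : Clusters G θ γ₁ γ₂ σ R R C D)
    (hE : PathFrame G η θ δ (2 * R) (interleave C D)) (hG : Linked G t K) (hδ : 0 ≤ δ)
    (hδ₁ : δ ≤ 1) (hθ : θ ≤ δ ^ (2 * R)) {L : List ℕ} (hL : ∀ i ∈ z :: L, i < R)
    (hzL : (z :: L).Pairwise fun i j => i < j ∧ ¬ Rich G.Adj (γ₁ * θ / 2) θ γ₂ (D i) (C j))
    (hσ : 4 ^ (2 * L.length) * σ ≤ θ) (hC : ∀ i < R, 4 ^ (2 * L.length) * (3 * K) ≤ θ * #(C i))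
    (hD : K ≤ γ₁ * θ * #(D z)) :
    HasStarts G δ (2 * R) (interleave C D) (γ₁ * θ) (2 * L.length) (2 * z + 1) := by
  intro X hX hXc T hT
  rw [interleave_two_mul_add_one] at hX hXc
  have hTC : ∀ l ∈ L, θ * #(C l) ≤ #(C l ∩ T) := fun l hl => by
    have hzl := ((List.pairwise_cons.1 hzL).1 l hl).1
    have hlR := hL l (List.mem_cons_of_mem _ hl)
    simpa only [interleave_two_mul] using
      hT.le_card_inter hδ hδ₁ hθ (c := 2 * l) (by omega) (by omega)
  have hsparse : ∀ i < R, ∀ l ∈ L, i < l → ¬ Rich G.Adj (γ₁ * θ / 2) θ γ₂ (D i) (C l) →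
      ∀ A ⊆ C i ∪ D i, SparseTo G (4 ^ (2 * L.length)) A (C l ∩ T) := by
    intro i hi l hl hil hrich A hA
    have hlR := hL l (List.mem_cons_of_mem _ hl)
    have hCC := hE.before (2 * i) (2 * l) (by omega) (by omega)
    have hDC := hE.before (2 * i + 1) (2 * l) (by omega) (by omega)
    rw [interleave_two_mul, interleave_two_mul] at hCC
    rw [interleave_two_mul, interleave_two_mul_add_one] at hDC
    have hb : Before (C i ∪ D i) (C l) := fun x hx =>
      (mem_union.1 hx).elim (hCC x) (hDC x)
    exact sparseTo_of_card_relIn_le (hb.mono hA subset_rfl) inter_subset_left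
      (by exact_mod_cast hσ) (hTC l hl)
      fun a ha => (h.rich_or_sparse i hi l hlR hil).resolve_left hrich a (hA ha)
  have hchain : SparseChain G K (2 * L.length) X (L.map fun l => C l ∩ T) T := by
    obtain ⟨hz, hzL⟩ := List.pairwise_cons.1 hzL
    obtain ⟨hzR, hLR⟩ := List.forall_mem_cons.1 hL
    refine ⟨List.pairwise_cons.2 ⟨?_, ?_⟩, ?_, ?_⟩
    · exact List.forall_mem_map.2 fun l hl => hsparse z hzR l hl (hz l hl).1 (hz l hl).2 X
        (hX.trans subset_union_right)
    · exact List.pairwise_map.2 (hzL.imp_of_mem fun hi hl hil => hsparse _ (hLR _ hi) _ hl hil.1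
        hil.2 _ (inter_subset_left.trans subset_union_left))
    · refine List.forall_mem_map.2 fun l hl => ?_
      exact_mod_cast (hC l (hLR l hl)).trans (hTC l hl)
    · exact List.forall_mem_map.2 fun l _ => inter_subset_right
  exact hchain.exists_startsIndPath hG _ (hG.le.trans (by exact_mod_cast hD.trans hXc)) (by simp)

lemma Clusters.hasStarts_of_route (h : Clusters G θ γ₁ γ₂ σ R R C D)
    (hE : PathFrame G η θ δ (2 * R) (interleave C D)) (hG : Linked G t K) (hη : 0 ≤ η)
    (hδ : 0 ≤ δ) (hδ₁ : δ ≤ 1) (hθ : θ ≤ δ ^ (2 * R)) (hγ₁ : 0 ≤ γ₁) (hγ₂ : 0 ≤ γ₂)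
    (hη₁ : (2 * R : ℕ) * η ≤ γ₁ * θ / 2) (hη₂ : (2 * R : ℕ) * η ≤ γ₂ * θ / 2)
    (hσ₀ : 0 ≤ σ) (hσ : 4 ^ (2 * k) * σ ≤ θ) (hC : ∀ i < R, 4 ^ (2 * k) * (3 * K) ≤ θ * #(C i))
    (hD : ∀ i < R, K ≤ γ₁ * θ * #(D i))
    (hr : Route (fun i j => Rich G.Adj (γ₁ * θ / 2) θ γ₂ (D i) (C j)) (range R) m u)
    (hm : m ≤ k) :
    HasStarts G δ (2 * R) (interleave C D) (γ₂ * θ) (2 * m + 1) (2 * u) := by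
  have hstep : ∀ u < R, ∀ p, HasStarts G δ (2 * R) (interleave C D) (γ₁ * θ) p (2 * u + 1) →
      HasStarts G δ (2 * R) (interleave C D) (γ₂ * θ) (p + 1) (2 * u) := by
    intro u hu p hp
    have hrich := h.rich u hu
    rw [← interleave_two_mul (C := C) (D := D) u,
      ← interleave_two_mul_add_one (C := C) (D := D) u] at hrich
    simpa only [mul_div_cancel₀ _ (two_ne_zero' ℝ)] using
      hE.hasStarts_succ hη hδ hδ₁ hθ hη₂ hγ₁ (by omega) (by omega) hrich hp
  induction hr with
  | @sparse z L hL hzL =>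
    have hL' : ∀ i ∈ z :: L, i < R := fun i hi => mem_range.1 (hL i hi)
    have hpow : (4 : ℝ) ^ (2 * L.length) ≤ 4 ^ (2 * k) :=
      pow_le_pow_right₀ (by norm_num) (by omega)
    have hz := hL' z List.mem_cons_self
    exact hstep z hz _ (h.hasStarts_of_sparse hE hG hδ hδ₁ hθ hL' hzL
      (le_trans (by gcongr) hσ) (fun i hi => le_trans (by gcongr) (hC i hi)) (hD z hz))
  | @step m u v hu huv hrich hv ih =>
    have huR := mem_range.1 hu
    have hvR := mem_range.1 hv.mem
    rw [← interleave_two_mul (C := C) (D := D) v,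
      ← interleave_two_mul_add_one (C := C) (D := D) u] at hrich
    have hDu := hE.hasStarts_succ hη hδ hδ₁ hθ hη₁ hγ₂ (by omega) (by omega) hrich
      (ih (by omega))
    rw [mul_div_cancel₀ _ (two_ne_zero' ℝ)] at hDu
    exact hstep u huR _ hDu

end Traversal

section Density

variable {V : Type*} {P : V → V → Prop} {r : ℕ} {W : Fin r → Finset V} {X Y : Finset V}
  {x : Fin r → V} {i j : Fin r} {d δ ε η κ : ℝ}

open scoped Classical in
/-- The tuples with `i`-th entry in `W i` whose entries satisfy `P` in increasing order of their
indices. For `P = G.Adjᶜ` and disjoint sets `W i`, these are the transversal cliques of the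
complement of `G`. -/
noncomputable def relTuples (P : V → V → Prop) (W : Fin r → Finset V) : Finset (Fin r → V) :=
  {x ∈ Fintype.piFinset W | ∀ i j, i < j → P (x i) (x j)}

lemma mem_relTuples : x ∈ relTuples P W ↔ (∀ i, x i ∈ W i) ∧ ∀ i j, i < j → P (x i) (x j) := by
  simp [relTuples]

lemma card_relTuples_le (W : Fin r → Finset V) : #(relTuples P W) ≤ ∏ i, #(W i) := by
  classical
  exact (card_filter_le _ _).trans_eq (Fintype.card_piFinset W)

/-- The tuple `W` with its `i`-th and `j`-th entries replaced by `X` and `Y`. -/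
def updatePair (W : Fin r → Finset V) (i j : Fin r) (X Y : Finset V) : Fin r → Finset V :=
  Function.update (Function.update W i X) j Y

lemma forall_mem_updatePair (hij : i ≠ j) : (∀ l, x l ∈ updatePair W i j X Y l) ↔
    x i ∈ X ∧ x j ∈ Y ∧ ∀ l, l ≠ i → l ≠ j → x l ∈ W l := by
  rw [updatePair, Function.forall_update_iff _ fun l S => x l ∈ S]
  constructor
  · rintro ⟨hj, h⟩
    refine ⟨by simpa using h i hij, hj, fun l hi hj => by simpa [hi] using h l hj⟩
  · rintro ⟨hi, hj, h⟩
    refine ⟨hj, fun l hlj => ?_⟩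
    rcases eq_or_ne l i with rfl | hli
    · simpa using hi
    · simpa [hli] using h l hli hlj

lemma updatePair_self : updatePair W i j (W i) (W j) = W := by
  simp [updatePair]

lemma exists_prod_card_updatePair (hij : i ≠ j) (W : Fin r → Finset V) :
    ∃ R : ℝ, 0 ≤ R ∧ ∀ X Y, ∏ l, (#(updatePair W i j X Y l) : ℝ) = #X * #Y * R := by
  refine ⟨∏ l ∈ (univ.erase j).erase i, (#(W l) : ℝ), prod_nonneg fun _ _ => Nat.cast_nonneg _,
    fun X Y => ?_⟩
  rw [← mul_prod_erase univ _ (mem_univ j),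
    ← mul_prod_erase (univ.erase j) _ (mem_erase.2 ⟨hij, mem_univ i⟩), ← mul_assoc,
    mul_comm (#X : ℝ)]
  congr 1
  · simp [updatePair, hij]
  · refine prod_congr rfl fun l hl => ?_
    rw [mem_erase, mem_erase] at hl
    simp [updatePair, hl.1, hl.2.1]

lemma card_relTuples_updatePair_le_of_sparse (hij : i < j)
    (h : ∀ a ∈ X, #(relIn P a Y) ≤ δ * #Y) :
    #(relTuples P (updatePair W i j X Y)) ≤ δ * ∏ l, (#(updatePair W i j X Y l) : ℝ) := by
  classical
  obtain ⟨R, hR, hprod⟩ := exists_prod_card_updatePair hij.ne W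
  have hcover : relTuples P (updatePair W i j X Y) ⊆
      X.biUnion fun a => Fintype.piFinset (updatePair W i j {a} (relIn P a Y)) := by
    intro x hx
    obtain ⟨hx, hxP⟩ := mem_relTuples.1 hx
    obtain ⟨hi, hj, hl⟩ := (forall_mem_updatePair hij.ne).1 hx
    exact mem_biUnion.2 ⟨x i, hi, Fintype.mem_piFinset.2 ((forall_mem_updatePair hij.ne).2
      ⟨mem_singleton_self _, mem_relIn.2 ⟨hj, hxP i j hij⟩, hl⟩)⟩
  calc (#(relTuples P (updatePair W i j X Y)) : ℝ)
      ≤ ∑ a ∈ X, (#(Fintype.piFinset (updatePair W i j {a} (relIn P a Y))) : ℝ) := by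
        exact_mod_cast (card_le_card hcover).trans card_biUnion_le
    _ = ∑ a ∈ X, #(relIn P a Y) * R := by
        simp only [Fintype.card_piFinset, Nat.cast_prod, hprod, card_singleton, Nat.cast_one,
          one_mul]
    _ ≤ ∑ _a ∈ X, δ * #Y * R := by
        gcongr with a ha
        exact h a ha
    _ = δ * ∏ l, (#(updatePair W i j X Y l) : ℝ) := by
        rw [hprod, sum_const, nsmul_eq_mul]
        ring

lemma card_relTuples_le_add [DecidableEq V] (hij : i ≠ j) (W : Fin r → Finset V)
    (X Y : Finset V) :
    #(relTuples P W) ≤ #(relTuples P (updatePair W i j (W i \ X) (W j))) +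
      #(relTuples P (updatePair W i j X (W j \ Y))) + #(relTuples P (updatePair W i j X Y)) := by
  have hcover : relTuples P W ⊆ relTuples P (updatePair W i j (W i \ X) (W j)) ∪
      relTuples P (updatePair W i j X (W j \ Y)) ∪ relTuples P (updatePair W i j X Y) := by
    intro x hx
    obtain ⟨hx, hxP⟩ := mem_relTuples.1 hx
    simp only [mem_union, mem_relTuples, forall_mem_updatePair hij, mem_sdiff]
    grind
  exact (card_le_card hcover).trans
    ((card_union_le _ _).trans (Nat.add_le_add_right (card_union_le _ _) _))

lemma card_relTuples_updatePair_le (hij : i ≠ j) (hd : 0 ≤ d) (hκ : 0 ≤ κ) (hκ₁ : κ ≤ 1)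
    (h : ∀ W' : Fin r → Finset V, (∀ l, κ * #(W l) ≤ #(W' l)) →
      #(relTuples P W') ≤ d * ∏ l, (#(W' l) : ℝ))
    (hX : X ⊆ W i) (hY : Y ⊆ W j) :
    #(relTuples P (updatePair W i j X Y)) ≤
      d * ∏ l, (#(updatePair W i j X Y l) : ℝ) + κ * ∏ l, (#(W l) : ℝ) := by
  obtain ⟨R, hR, hprod⟩ := exists_prod_card_updatePair hij W
  have hW : ∏ l, (#(W l) : ℝ) = #(W i) * #(W j) * R := by
    rw [← hprod, updatePair_self]
  have hself (l : Fin r) : κ * #(W l) ≤ #(W l) := mul_le_of_le_one_left (Nat.cast_nonneg _) hκ₁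
  by_cases hlarge : κ * #(W i) ≤ #X ∧ κ * #(W j) ≤ #Y
  · refine (h _ fun l => ?_).trans (le_add_of_nonneg_right (by positivity))
    simp only [updatePair, Function.update_apply]
    split_ifs with hlj hli
    · exact hlj ▸ hlarge.2
    · exact hli ▸ hlarge.1
    · exact hself l
  · have hXY : (#X * #Y : ℝ) ≤ κ * (#(W i) * #(W j)) := by
      rcases not_and_or.1 hlarge with hX' | hY'
      · rw [← mul_assoc]
        gcongr
        exact (not_le.1 hX').le
      · rw [mul_left_comm]
        gcongr
        exact (not_le.1 hY').le
    calc (#(relTuples P (updatePair W i j X Y)) : ℝ)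
        ≤ ∏ l, (#(updatePair W i j X Y l) : ℝ) := by exact_mod_cast card_relTuples_le _
      _ ≤ κ * ∏ l, (#(W l) : ℝ) := by
          rw [hprod, hW, ← mul_assoc]
          gcongr
      _ ≤ _ := le_add_of_nonneg_left (by positivity)

-- A pair of large sets without a rich vertex carries less than half of the expected tuples, so the
-- remaining tuples are denser than average by a factor of about `1 + η ^ 2 / 2`.
lemma exists_density_increment (hε : 0 < ε) (hε₁ : ε ≤ 1) (hη : 0 < η) (hη₁ : η ≤ 1)
    (hd : ε ≤ d) (hW : ∀ i, 0 < #(W i)) (hN : d * ∏ i, (#(W i) : ℝ) ≤ #(relTuples P W))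
    (hij : i < j) (hfail : ¬ Rich P η η (ε / 2) (W i) (W j)) :
    ∃ W' : Fin r → Finset V, (∀ i, ε * η ^ 2 / 16 * #(W i) ≤ #(W' i)) ∧
      d * (1 + η ^ 2 / 4) * ∏ i, (#(W' i) : ℝ) ≤ #(relTuples P W') := by
  classical
  by_contra! hno
  obtain ⟨X, hX, hXc, Y, hY, hYc, hs⟩ := (rich_or_exists_sparse P _ _ _ _ _).resolve_left hfail
  have hd₀ : 0 < d := hε.trans_le hd
  have hκ₁ : ε * η ^ 2 / 16 ≤ 1 := by
    have := mul_le_one₀ hε₁ (by positivity) (pow_le_one₀ hη.le hη₁ (n := 2))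
    linarith
  have hbound {X' Y' : Finset V} (hX' : X' ⊆ W i) (hY' : Y' ⊆ W j) :=
    card_relTuples_updatePair_le (P := P) hij.ne (by positivity) (by positivity) hκ₁
      (fun W' hW' => (hno W' hW').le) hX' hY'
  have h₁ := hbound (sdiff_subset (t := X)) (subset_refl (W j))
  have h₂ := hbound hX (sdiff_subset (t := Y))
  have h₃ := card_relTuples_updatePair_le_of_sparse (W := W) hij hs
  have hsum : (#(relTuples P W) : ℝ) ≤ #(relTuples P (updatePair W i j (W i \ X) (W j))) +
      #(relTuples P (updatePair W i j X (W j \ Y))) + #(relTuples P (updatePair W i j X Y)) := by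
    exact_mod_cast card_relTuples_le_add hij.ne W X Y
  obtain ⟨R, hR, hprod⟩ := exists_prod_card_updatePair hij.ne W
  have hWpos : 0 < ∏ l, (#(W l) : ℝ) := prod_pos fun l _ => by exact_mod_cast hW l
  have hWprod : ∏ l, (#(W l) : ℝ) = #(W i) * #(W j) * R := by
    rw [← hprod, updatePair_self]
  rw [hprod, cast_card_sdiff hX] at h₁
  rw [hprod, cast_card_sdiff hY] at h₂
  rw [hprod] at h₃
  have hXY : η ^ 2 * ∏ l, (#(W l) : ℝ) ≤ #X * #Y * R :=
    calc η ^ 2 * ∏ l, (#(W l) : ℝ) = η * #(W i) * (η * #(W j)) * R := by rw [hWprod]; ring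
      _ ≤ #X * #Y * R := by gcongr
  have hXY₀ : (0 : ℝ) ≤ #X * #Y * R := by positivity
  generalize ∏ l, (#(W l) : ℝ) = M at *
  have hdXY := mul_le_mul_of_nonneg_left hXY hd₀.le
  have hεM := mul_le_mul_of_nonneg_right hd (by positivity : 0 ≤ η ^ 2 * M)
  have hεXY := mul_le_mul_of_nonneg_right hd hXY₀
  have hM : 0 < ε * (η ^ 2 * M) := by positivity
  have hηXY : 0 ≤ d * η ^ 2 * (#X * #Y * R) := by positivity
  subst hWprod
  linarith

lemma exists_forall_rich (hε : 0 < ε) (hε₁ : ε ≤ 1) (hη : 0 < η) (hη₁ : η ≤ 1) (m : ℕ)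
    (hd : ε ≤ d) (hdm : 1 < d * (1 + η ^ 2 / 4) ^ m) (hW : ∀ i, 0 < #(W i))
    (hN : d * ∏ i, (#(W i) : ℝ) ≤ #(relTuples P W)) :
    ∃ W' : Fin r → Finset V, (∀ i, (ε * η ^ 2 / 16) ^ m * #(W i) ≤ #(W' i)) ∧
      ∀ i j, i < j → Rich P η η (ε / 2) (W' i) (W' j) := by
  induction m generalizing d W with
  | zero =>
    have hWpos : 0 < ∏ l, (#(W l) : ℝ) := prod_pos fun l _ => by exact_mod_cast hW l
    have hle : d * ∏ i, (#(W i) : ℝ) ≤ 1 * ∏ i, (#(W i) : ℝ) := by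
      rw [one_mul]
      exact hN.trans (by exact_mod_cast card_relTuples_le W)
    rw [pow_zero, mul_one] at hdm
    exact absurd (le_of_mul_le_mul_right hle hWpos) hdm.not_ge
  | succ m ih =>
    by_cases hrich : ∀ i j, i < j → Rich P η η (ε / 2) (W i) (W j)
    · have hκ₁ : ε * η ^ 2 / 16 ≤ 1 := by
        have := mul_le_one₀ hε₁ (by positivity) (pow_le_one₀ hη.le hη₁ (n := 2))
        linarith
      exact ⟨W, fun i => mul_le_of_le_one_left (Nat.cast_nonneg _)
        (pow_le_one₀ (by positivity) hκ₁), hrich⟩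
    · push Not at hrich
      obtain ⟨i, j, hij, hfail⟩ := hrich
      obtain ⟨W₁, hW₁, hN₁⟩ := exists_density_increment hε hε₁ hη hη₁ hd hW hN hij hfail
      have hW₁pos (l : Fin r) : 0 < #(W₁ l) := by
        have hWl : (0 : ℝ) < #(W l) := by exact_mod_cast hW l
        exact_mod_cast (by positivity : 0 < ε * η ^ 2 / 16 * #(W l)).trans_le (hW₁ l)
      obtain ⟨W', hW', hrich⟩ := ih
        (hd.trans (le_mul_of_one_le_right (hε.le.trans hd) (by linarith [sq_nonneg η])))
        (by rwa [mul_assoc, ← pow_succ']) hW₁pos hN₁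
      refine ⟨W', fun i => le_trans ?_ (hW' i), hrich⟩
      rw [pow_succ, mul_assoc]
      gcongr
      exact hW₁ i

end Density

section OrderedDensity

variable {V : Type*} [LinearOrder V]

lemma cliqueCount_compl_le [Fintype V] (G : SimpleGraph V) (r : ℕ) :
    cliqueCount Gᶜ r ≤ #(relTuples (fun a b => a < b ∧ ¬ G.Adj a b) fun _ : Fin r => univ) := by
  classical
  set T := relTuples (fun a b => a < b ∧ ¬ G.Adj a b) fun _ : Fin r => univ
  have hcover : {s : Finset V | #s = r ∧ Gᶜ.IsClique s} ⊆ T.image (image · univ) := by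
    rintro s ⟨hs, hclique⟩
    refine mem_image.2 ⟨s.orderEmbOfFin hs, mem_relTuples.2 ⟨fun _ => mem_univ _,
      fun i j hij => ?_⟩, s.image_orderEmbOfFin_univ hs⟩
    have hlt := (s.orderEmbOfFin hs).strictMono hij
    have hadj := hclique (s.orderEmbOfFin_mem hs i) (s.orderEmbOfFin_mem hs j) hlt.ne
    exact ⟨hlt, ((G.compl_adj _ _).1 hadj).2⟩
  calc cliqueCount Gᶜ r ≤ Set.ncard (T.image (image · univ) : Set (Finset V)) :=
        Set.ncard_le_ncard hcover (finite_toSet _)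
    _ = #(T.image (image · univ)) := Set.ncard_coe_finset _
    _ ≤ #T := card_image_le

lemma exists_before_middle_before (W : Finset V) (hW : 4 ≤ #W) :
    ∃ F ⊆ W, ∃ B ⊆ W, ∃ L ⊆ W, #W ≤ 8 * #F ∧ #W ≤ 2 * #B ∧ #W ≤ 8 * #L ∧
      Before F B ∧ Before B L := by
  obtain ⟨F, hF, hFc, hFW⟩ := exists_initial_segment W (a := #W / 4) (by omega)
  have hWF : #(W \ F) = #W - #W / 4 := by rw [card_sdiff_of_subset hF, hFc]
  obtain ⟨B, hB, hBc, hBL⟩ := exists_initial_segment (W \ F) (a := #W - 2 * (#W / 4)) (by omega)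
  have hL : #((W \ F) \ B) = #(W \ F) - #B := card_sdiff_of_subset hB
  exact ⟨F, hF, B, hB.trans sdiff_subset, (W \ F) \ B, sdiff_subset.trans sdiff_subset,
    by omega, by omega, by omega, hFW.mono subset_rfl hB, hBL⟩

-- An increasing pair from the last quarter of `W i` to the first quarter of `W j` separates the
-- middle halves.
lemma exists_before_of_rich_lt {r : ℕ} {δ : ℝ} {W : Fin r → Finset V} (hδ : 0 < δ)
    (hW : ∀ i, 4 ≤ #(W i)) (hrich : ∀ i j, i < j → Rich (· < ·) (1 / 8) (1 / 8) δ (W i) (W j)) :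
    ∃ B : Fin r → Finset V, (∀ i, B i ⊆ W i ∧ #(W i) ≤ 2 * #(B i)) ∧
      ∀ i j, i < j → Before (B i) (B j) := by
  choose F hF B hB L hL hFc hBc hLc hFB hBL using
    fun i => exists_before_middle_before (W i) (hW i)
  have heighth {i : Fin r} {S : Finset V} (hS : #(W i) ≤ 8 * #S) : 1 / 8 * (#(W i) : ℝ) ≤ #S := by
    rw [← Nat.cast_le (α := ℝ)] at hS
    push_cast at hS
    linarith
  refine ⟨B, fun i => ⟨hB i, hBc i⟩, fun i j hij x hx y hy => ?_⟩
  obtain ⟨l, hl, hlF⟩ := hrich i j hij _ (hL i) (heighth (hLc i)) _ (hF j) (heighth (hFc j))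
  have hFpos : (0 : ℝ) < #(F j) := by
    have := hW j
    have := hFc j
    exact_mod_cast (by omega : 0 < #(F j))
  obtain ⟨f, hf⟩ := card_pos.1 (Nat.cast_pos.1 ((mul_pos hδ hFpos).trans_le hlF))
  obtain ⟨hfF, hlf⟩ := mem_relIn.1 hf
  exact (hBL i x hx l hl).trans (hlf.trans (hFB j f hfF y hy))

lemma exists_before_rich {ε η : ℝ} (hε : 0 < ε) (hε₁ : ε ≤ 1) (hη : 0 < η) (r : ℕ) :
    ∃ ρ : ℝ, 0 < ρ ∧ ∃ n₀ : ℕ, ∀ {V : Type*} [LinearOrder V] [Fintype V] (G : SimpleGraph V),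
      n₀ ≤ Fintype.card V → ε * (Fintype.card V : ℝ) ^ r ≤ cliqueCount Gᶜ r →
      ∃ B : Fin r → Finset V, (∀ i, ρ * Fintype.card V ≤ #(B i)) ∧
        ∀ i j, i < j → Before (B i) (B j) ∧ Rich G.Adjᶜ η η (ε / 2) (B i) (B j) := by
  obtain ⟨ζ, hζ, hζη, hζ₁⟩ : ∃ ζ > 0, ζ ≤ η / 2 ∧ ζ ≤ 1 / 8 :=
    ⟨min (η / 2) (1 / 8), by positivity, min_le_left _ _, min_le_right _ _⟩
  obtain ⟨m, hm⟩ := pow_unbounded_of_one_lt (1 / ε)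
    (lt_add_of_pos_right 1 (by positivity : 0 < ζ ^ 2 / 4))
  rw [div_lt_iff₀' hε] at hm
  set κ := (ε * ζ ^ 2 / 16) ^ m
  have hκ : 0 < κ := by positivity
  obtain ⟨n₀, hn₀⟩ := exists_nat_ge (4 / κ)
  have hn₀' : 0 < n₀ := Nat.cast_pos.1 ((by positivity : 0 < 4 / κ).trans_le hn₀)
  refine ⟨κ / 2, by positivity, n₀, fun {V} _ _ G hn hG => ?_⟩
  obtain ⟨W, hWc, hrich⟩ := exists_forall_rich (P := fun a b => a < b ∧ ¬ G.Adj a b) (r := r)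
    (W := fun _ => univ) hε hε₁ hζ (hζ₁.trans (by norm_num)) m le_rfl hm
    (fun _ => hn₀'.trans_le hn) (by
      rw [prod_const, card_univ, card_univ, Fintype.card_fin]
      exact hG.trans (by exact_mod_cast cliqueCount_compl_le G r))
  have hW (i : Fin r) : 4 ≤ #(W i) := by
    rw [div_le_iff₀' hκ] at hn₀
    exact_mod_cast hn₀.trans (le_trans (by gcongr; exact hn) (hWc i))
  obtain ⟨B, hBW, hB⟩ := exists_before_of_rich_lt (half_pos hε) hW fun i j hij =>
    ((hrich i j hij).imp fun _ _ h => h.1).mono subset_rfl subset_rfl (by gcongr) (by gcongr)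
  have hhalf (i : Fin r) : (#(W i) : ℝ) ≤ 2 * #(B i) := by exact_mod_cast (hBW i).2
  have hζB (i : Fin r) : ζ * #(W i) ≤ η * #(B i) :=
    calc ζ * #(W i) ≤ η / 2 * (2 * #(B i)) := by
          gcongr
          exact hhalf i
      _ = η * #(B i) := by ring
  refine ⟨B, fun i => ?_, fun i j hij => ⟨hB i j hij, ?_⟩⟩
  · have := (hWc i).trans (hhalf i)
    rw [card_univ] at this
    linarith
  · exact ((hrich i j hij).imp fun _ _ h => h.2).mono (hBW i).1 (hBW j).1 (hζB i) (hζB j)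

end OrderedDensity

section PathExistence

variable {V : Type*} [LinearOrder V] {G : SimpleGraph V} {γ₁ γ₂ δ ζ η θ ρ σ : ℝ} {R : ℕ}
  {A B C D : ℕ → Finset V}

lemma TargetedClusters.interleave_subset (h : TargetedClusters G θ γ₁ γ₂ σ ρ R R B A C D) {a : ℕ}
    (ha : a < 2 * R) : interleave C D a ⊆ B (a / 2) := by
  rw [interleave]
  split_ifs
  · exact h.subset_left _ (by omega)
  · exact h.subset_right _ (by omega)

lemma TargetedClusters.le_card_interleave (h : TargetedClusters G θ γ₁ γ₂ σ ρ R R B A C D) {a : ℕ}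
    (ha : a < 2 * R) : ρ * #(B (a / 2)) ≤ #(interleave C D a) := by
  rw [interleave]
  split_ifs
  · exact h.le_card_left _ (by omega)
  · exact h.le_card_right _ (by omega)

lemma TargetedClusters.pathFrame (h : TargetedClusters G θ γ₁ γ₂ σ ρ R R B A C D)
    (hB : ∀ i j, i < j → j < R → Before (B i) (B j) ∧ Rich G.Adjᶜ ζ ζ δ (B i) (B j))
    (hη : 0 ≤ η) (hθ : 0 ≤ θ) (hζη : ζ ≤ η * ρ) (hζθ : ζ ≤ θ * ρ) :
    PathFrame G η θ δ (2 * R) (interleave C D) := by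
  refine ⟨fun a b hab hb => ?_, fun a b hab hb => ?_⟩
  · rcases (Nat.div_le_div_right hab.le : a / 2 ≤ b / 2).eq_or_lt with hdiv | hdiv
    · obtain ⟨i, rfl⟩ : Even a := by grind
      obtain rfl : b = 2 * i + 1 := by omega
      rw [← two_mul, interleave_two_mul, interleave_two_mul_add_one]
      exact h.before i (by omega)
    · exact (hB _ _ hdiv (by omega)).1.mono (h.interleave_subset (by omega))
        (h.interleave_subset hb)
  · refine (hB (a / 2) (b / 2) (by omega) (by omega)).2.mono (h.interleave_subset (by omega))
      (h.interleave_subset hb) ?_ ?_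
    · calc ζ * #(B (a / 2)) ≤ η * ρ * #(B (a / 2)) := by gcongr
        _ = η * (ρ * #(B (a / 2))) := mul_assoc _ _ _
        _ ≤ η * #(interleave C D a) := by
            gcongr
            exact h.le_card_interleave (by omega)
    · calc ζ * #(B (b / 2)) ≤ θ * ρ * #(B (b / 2)) := by gcongr
        _ = θ * (ρ * #(B (b / 2))) := mul_assoc _ _ _
        _ ≤ θ * #(interleave C D b) := by
            gcongr
            exact h.le_card_interleave hb

lemma TargetedClusters.exists_startsIndPath {k t K : ℕ} {M : ℝ}
    (h : TargetedClusters G θ γ₁ γ₂ (θ / 4 ^ (2 * k)) ρ R R B A C D) (hG : Linked G t K)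
    (hE : PathFrame G η θ δ (2 * R) (interleave C D)) (hR : (k + 1).choose 2 + 1 ≤ R)
    (hδ : 0 ≤ δ) (hδ₁ : δ ≤ 1) (hθδ : θ ≤ δ ^ (2 * R)) (hη : 0 ≤ η)
    (hη₁ : (2 * R : ℕ) * η ≤ γ₁ * θ / 2) (hη₂ : (2 * R : ℕ) * η ≤ γ₂ * θ / 2) (hθ : 0 ≤ θ)
    (hγ₁ : 0 ≤ γ₁) (hγ₂ : 0 ≤ γ₂) (hγ₂θ : γ₂ * θ ≤ 1) (hρ : 0 ≤ ρ)
    (hMC : 4 ^ (2 * k) * 3 ≤ θ * ρ * M) (hMD : 1 ≤ γ₁ * θ * ρ * M)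
    (hB : ∀ i < R, M * K ≤ #(B i)) : ∃ T v, StartsIndPath G (2 * k + 1) T v := by
  have hC : ∀ i < R, 4 ^ (2 * k) * (3 * (K : ℝ)) ≤ θ * #(C i) := fun i hi =>
    calc 4 ^ (2 * k) * (3 * (K : ℝ)) = 4 ^ (2 * k) * 3 * K := by ring
      _ ≤ θ * ρ * M * K := by gcongr
      _ = θ * (ρ * (M * K)) := by ring
      _ ≤ θ * (ρ * #(B i)) := by gcongr; exact hB i hi
      _ ≤ θ * #(C i) := by gcongr; exact h.le_card_left i hi
  have hD : ∀ i < R, (K : ℝ) ≤ γ₁ * θ * #(D i) := fun i hi =>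
    calc (K : ℝ) = 1 * K := (one_mul _).symm
      _ ≤ γ₁ * θ * ρ * M * K := by gcongr
      _ = γ₁ * θ * (ρ * (M * K)) := by ring
      _ ≤ γ₁ * θ * (ρ * #(B i)) := by gcongr; exact hB i hi
      _ ≤ γ₁ * θ * #(D i) := by gcongr; exact h.le_card_right i hi
  obtain ⟨u, hu⟩ := exists_route (fun i j => Rich G.Adj (γ₁ * θ / 2) θ γ₂ (D i) (C j))
    (k := k) (S := range R) (by rwa [card_range])
  have hstarts := h.hasStarts_of_route hE hG hη hδ hδ₁ hθδ hγ₁ hγ₂ hη₁ hη₂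
    (by positivity) (mul_div_cancel₀ θ (by positivity)).le hC hD hu le_rfl
  obtain ⟨v, -, hv⟩ := hstarts _ subset_rfl (mul_le_of_le_one_left (Nat.cast_nonneg _) hγ₂θ)
    ((range (2 * R)).biUnion (interleave C D)) fun c _ hc => by
      rw [inter_eq_left.2 (subset_biUnion_of_mem _ (mem_range.2 hc))]
      exact mul_le_of_le_one_left (Nat.cast_nonneg _) (pow_le_one₀ hδ hδ₁)
  exact ⟨_, v, hv⟩

lemma exists_startsIndPath_of_before_rich (k : ℕ) (hδ : 0 < δ) (hδ₁ : δ ≤ 1) :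
    ∃ ζ M : ℝ, 0 < ζ ∧ 0 < M ∧ ∀ {V : Type*} [LinearOrder V] (G : SimpleGraph V) (t K : ℕ)
      (B : ℕ → Finset V), Linked G t K →
      (∀ i j, i < j → j < (k + 1).choose 2 + 1 →
        Before (B i) (B j) ∧ Rich G.Adjᶜ ζ ζ δ (B i) (B j)) →
      (∀ i < (k + 1).choose 2 + 1, M * K ≤ #(B i)) → ∃ T v, StartsIndPath G (2 * k + 1) T v := by
  set R := (k + 1).choose 2 + 1
  set θ := δ ^ (2 * R)
  have hθ : 0 < θ := by positivity
  have hθ₁ : θ ≤ 1 := pow_le_one₀ hδ.le hδ₁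
  obtain ⟨γ₁, γ₂, hγ₁, hγ₂, hγ₂σ, hclusters⟩ := exists_targetedClusters (2 * k + 1) R hθ hθ₁
    (δ := θ / 4 ^ (2 * k)) (by positivity)
  obtain ⟨ρ, C₀, hρ, hclusters⟩ := hclusters R le_rfl
  have hγ₂θ : γ₂ * θ ≤ 1 := mul_le_one₀
    (hγ₂σ.trans ((div_le_self hθ.le (one_le_pow₀ (by norm_num))).trans hθ₁)) hθ.le hθ₁
  obtain ⟨η, hη, hη₁, hη₂⟩ : ∃ η > 0, (2 * R : ℕ) * η ≤ γ₁ * θ / 2 ∧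
      (2 * R : ℕ) * η ≤ γ₂ * θ / 2 := by
    refine ⟨min (γ₁ * θ / 2) (γ₂ * θ / 2) / (2 * R : ℕ), by positivity, ?_⟩
    rw [mul_div_cancel₀ _ (by positivity)]
    exact ⟨min_le_left _ _, min_le_right _ _⟩
  obtain ⟨M, hM, hMC₀, hMC, hMD⟩ : ∃ M > 0, C₀ ≤ M ∧ 4 ^ (2 * k) * 3 ≤ θ * ρ * M ∧
      1 ≤ γ₁ * θ * ρ * M := by
    refine ⟨max C₀ (max (4 ^ (2 * k) * 3 / (θ * ρ)) (1 / (γ₁ * θ * ρ))), by positivity,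
      le_max_left _ _, ?_, ?_⟩
    · rw [← div_le_iff₀' (by positivity)]
      exact (le_max_left _ _).trans (le_max_right _ _)
    · rw [← div_le_iff₀' (by positivity)]
      exact (le_max_right _ _).trans (le_max_right _ _)
  refine ⟨min (η * ρ) (θ * ρ), M, by positivity, hM, fun {V} _ G t K B hG hB hBc => ?_⟩
  by_contra! hfree
  obtain ⟨C, D, h⟩ := hclusters G t K hG hfree B B fun i hi =>
    le_trans (by gcongr) (hBc i hi)
  have hE := h.pathFrame hB hη.le hθ.le (min_le_left _ _) (min_le_right _ _)
  obtain ⟨T, v, hv⟩ := h.exists_startsIndPath hG hE le_rfl hδ.le hδ₁ le_rfl hη.le hη₁ hη₂ hθ.le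
    hγ₁.le hγ₂.le hγ₂θ hρ.le hMC hMD hBc
  exact hfree T v hv

lemma exists_startsIndPath_of_le_cliqueCount_compl {ε : ℝ} (hε : 0 < ε) (hε₁ : ε ≤ 1) (k : ℕ) :
    ∃ c : ℝ, 0 < c ∧ ∃ n₀ : ℕ, ∀ {V : Type*} [LinearOrder V] [Fintype V] (G : SimpleGraph V)
      (t K : ℕ), Linked G t K → n₀ ≤ Fintype.card V → K ≤ c * Fintype.card V →
      ε * (Fintype.card V : ℝ) ^ ((k + 1).choose 2 + 1) ≤ cliqueCount Gᶜ ((k + 1).choose 2 + 1) →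
      ∃ T v, StartsIndPath G (2 * k + 1) T v := by
  obtain ⟨ζ, M, hζ, hM, hpath⟩ := exists_startsIndPath_of_before_rich k (half_pos hε)
    (by linarith)
  obtain ⟨ρ, hρ, n₀, hB⟩ := exists_before_rich hε hε₁ hζ ((k + 1).choose 2 + 1)
  refine ⟨ρ / M, by positivity, n₀, fun {V} _ _ G t K hG hn hK hcount => ?_⟩
  obtain ⟨B, hBc, hB⟩ := hB G hn hcount
  refine hpath G t K (fun i => B (Fin.ofNat _ i)) hG (fun i j hij hj => hB _ _ ?_)
    fun i _ => le_trans ?_ (hBc _)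
  · rwa [Fin.lt_def, Fin.val_ofNat, Fin.val_ofNat, Nat.mod_eq_of_lt (hij.trans hj),
      Nat.mod_eq_of_lt hj]
  · rwa [div_mul_eq_mul_div, le_div_iff₀' hM] at hK

end PathExistence

section Asymptotics

lemma noHole_of_not_containsBlowup {V : Type*} [LinearOrder V] {G : SimpleGraph V} {t : ℕ}
    (h : ¬ ContainsBlowup Gᶜ 2 t) : NoHole G t := by
  intro A B hA hB hAB
  by_contra! hno
  obtain ⟨A', hA', hA'c⟩ := exists_subset_card_eq hA
  obtain ⟨B', hB', hB'c⟩ := exists_subset_card_eq hB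
  have hadj : ∀ x ∈ A', ∀ y ∈ B', Gᶜ.Adj x y := fun x hx y hy =>
    (G.compl_adj _ _).2 ⟨(hAB x (hA' hx) y (hB' hy)).ne, hno x (hA' hx) y (hB' hy)⟩
  have hdisj : Disjoint A' B' := disjoint_left.2 fun x hx hx' => (hadj x hx x hx').ne rfl
  refine h ⟨![A', B'], ?_, ?_, ?_⟩
  · simp [Fin.forall_fin_two, hA'c, hB'c]
  · simp [Fin.forall_fin_two, hdisj, hdisj.symm]
  · simpa [Fin.forall_fin_two, -SimpleGraph.compl_adj] using
      ⟨hadj, fun y hy x hx => (hadj x hx y hy).symm⟩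

lemma natCast_le_two_pow_ceil_two_mul_log (n : ℕ) : n ≤ 2 ^ ⌈2 * Real.log n⌉₊ := by
  rcases n.eq_zero_or_pos with rfl | hn
  · exact Nat.zero_le _
  have hn' : (0 : ℝ) < n := by exact_mod_cast hn
  have hpow : (n : ℝ) ≤ 2 ^ ⌈2 * Real.log n⌉₊ := by
    rw [← Real.log_le_log_iff hn' (by positivity), Real.log_pow]
    have hlog : 0 ≤ Real.log n := Real.log_natCast_nonneg n
    calc Real.log n ≤ 2 * Real.log n * Real.log 2 := by nlinarith [Real.log_two_gt_d9]
      _ ≤ ⌈2 * Real.log n⌉₊ * Real.log 2 := by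
          gcongr
          exact Nat.le_ceil _
  exact_mod_cast hpow

lemma eventually_three_mul_ceil_mul_ceil_le {c : ℝ} (hc : 0 < c) : ∀ᶠ n : ℕ in Filter.atTop,
    3 * (⌈c / 48 * n / Real.log n⌉₊ : ℝ) * (⌈2 * Real.log n⌉₊ + 1) ≤ c * n := by
  have hlog := (Real.isLittleO_log_id_atTop.bound (by positivity : 0 < c / 24)).natCast_atTop
  have hone := (Real.tendsto_log_atTop.eventually_ge_atTop 1).natCast_atTop
  filter_upwards [hlog, hone] with n hlog hone
  rw [id, Real.norm_of_nonneg (by linarith), Real.norm_of_nonneg (by positivity)] at hlog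
  have ht := (Nat.ceil_lt_add_one (by positivity : 0 ≤ c / 48 * n / Real.log n)).le
  have hm := (Nat.ceil_lt_add_one (by positivity : 0 ≤ 2 * Real.log n)).le
  calc 3 * (⌈c / 48 * n / Real.log n⌉₊ : ℝ) * (⌈2 * Real.log n⌉₊ + 1)
      ≤ 3 * (c / 48 * n / Real.log n + 1) * (4 * Real.log n) := by
        gcongr
        linarith
    _ = c / 4 * n + 12 * Real.log n := by
        field_simp
        ring
    _ ≤ c * n := by
        have : 0 ≤ c * n := by positivity
        linarith

end Asymptotics

end OrderedGraph

theorem stmt_2_general (k : ℕ) (ε : ℝ) (hε : 0 < ε) :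
    ∃ c : ℝ, 0 < c ∧ ∃ n₀ : ℕ, ∀ n : ℕ, n₀ ≤ n →
      ∀ G : SimpleGraph (Fin n),
        ¬ HasIndMonPath G (2 * k) →
        ε * (n : ℝ) ^ ((k ^ 2 - k + 2) / 2) ≤ (cliqueCount Gᶜ ((k ^ 2 - k + 2) / 2) : ℝ) →
        ContainsBlowup Gᶜ 2 ⌈c * (n : ℝ) / Real.log n⌉₊ := by
  obtain _ | k := k
  · exact ⟨1, one_pos, 0, fun n _ G hG => absurd ⟨Fin.elim0, fun i => i.elim0, fun i => i.elim0⟩ hG⟩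
  have hr : ((k + 1) ^ 2 - (k + 1) + 2) / 2 = (k + 1).choose 2 + 1 := by
    rw [Nat.add_div_right _ two_pos, Nat.choose_two_right, Nat.mul_sub_one, sq]
  obtain ⟨c, hc, n₁, hpath⟩ := OrderedGraph.exists_startsIndPath_of_le_cliqueCount_compl
    (lt_min hε one_pos) (min_le_right ε 1) k
  obtain ⟨n₂, hsize⟩ := Filter.eventually_atTop.1
    (OrderedGraph.eventually_three_mul_ceil_mul_ceil_le hc)
  refine ⟨c / 48, by positivity, max n₁ n₂, fun n hn G hG hcount => ?_⟩
  rw [hr] at hcount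
  by_contra hblowup
  have hhole := OrderedGraph.noHole_of_not_containsBlowup hblowup
  have hlaunch := hhole.launches
    ((Fintype.card_fin n).trans_le (OrderedGraph.natCast_le_two_pow_ceil_two_mul_log n))
  obtain ⟨T, v, hv⟩ := hpath G _ _ ⟨hhole, hlaunch, by nlinarith⟩
    (by rw [Fintype.card_fin]; exact (le_max_left _ _).trans hn)
    (by rw [Fintype.card_fin]; exact_mod_cast hsize n ((le_max_right _ _).trans hn))
    (by rw [Fintype.card_fin]; exact le_trans (by gcongr; exact min_le_left _ _) hcount)
  exact hG hv.hasIndMonPath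

theorem stmt_2 (k : ℕ) (hk : 3 ≤ k) (ε : ℝ) (hε : 0 < ε) :
    ∃ c : ℝ, 0 < c ∧ ∃ n₀ : ℕ, ∀ n : ℕ, n₀ ≤ n →
      ∀ G : SimpleGraph (Fin n),
        ¬ HasIndMonPath G (2 * k) →
        ε * (n : ℝ) ^ ((k ^ 2 - k + 2) / 2) ≤ (cliqueCount Gᶜ ((k ^ 2 - k + 2) / 2) : ℝ) →
        ContainsBlowup Gᶜ 2 ⌈c * (n : ℝ) / Real.log n⌉₊ :=
  stmt_2_general k ε hε
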